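/- arXiv:1501.07724 — 3 statements merged into one kernel-verified Lean document; each statement's English description precedes it below -/
import Mathlib

section
/- For every odd prime p and every integer n ≥ 3 there exists a smooth action of ℤ/p by diffeomorphisms on the standard smooth sphere S^{n+2} whose fixed point set is non-empty and path-connected and such that TC^{ℤ/p}(S^{n+2}) ≥ 4. (The fixed point set is a smooth homology n-sphere whose fundamental group is neither trivial nor free, so its Lusternik–Schnirelmann category, and hence its topological complexity, is at least 4.) -/
open Set unitInterval

namespace PaperTC

variable {G X : Type*}

/-- The orbit of `x` under the action `act`. -/
def orbit (act : G → X → X) (x : X) : Set X := {y | ∃ g, act g x = y}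

/-- The fixed point set of the action `act`. -/
def fixedSet (act : G → X → X) : Set X := {x | ∀ g, act g x = x}

/-- The fixed point set of a subset `S` of the acting group. -/
def fixedSetOf (act : G → X → X) (S : Set G) : Set X := {x | ∀ g ∈ S, act g x = x}

/-- `minCover P` is the least `k ≥ 1` satisfying `P k`, as an element of `ℕ∞`
(equal to `∞` if there is no such `k`). -/
noncomputable def minCover (P : ℕ → Prop) : ℕ∞ :=
  sInf {k : ℕ∞ | ∃ m : ℕ, k = m ∧ 1 ≤ m ∧ P m}

section Plain

variable (Y : Type*) [TopologicalSpace Y]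

/-- `Y × Y` can be covered by `k` open sets each admitting a motion planner. -/
def TCcover (k : ℕ) : Prop :=
  ∃ U : Fin k → Set (Y × Y),
    (∀ i, IsOpen (U i)) ∧ (⋃ i, U i) = univ ∧
    ∀ i, ∃ s : Y × Y → C(I, Y),
      ContinuousOn s (U i) ∧ ∀ p ∈ U i, s p 0 = p.1 ∧ s p 1 = p.2

/-- Topological complexity (non-reduced, possibly infinite). -/
noncomputable def TC : ℕ∞ := minCover (TCcover Y)

/-- `Y` can be covered by `k` open sets, each of which can be deformed within `Y`
to a point. -/
def catCover (k : ℕ) : Prop :=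
  ∃ U : Fin k → Set Y,
    (∀ i, IsOpen (U i)) ∧ (⋃ i, U i) = univ ∧
    ∀ i, ∃ H : Y × I → Y,
      ContinuousOn H (U i ×ˢ (univ : Set I)) ∧ (∀ x ∈ U i, H (x, 0) = x) ∧
      ∃ y₀, ∀ x ∈ U i, H (x, 1) = y₀

/-- Non-reduced Lusternik–Schnirelmann category. -/
noncomputable def cat : ℕ∞ := minCover (catCover Y)

end Plain

section Equivariant

variable [TopologicalSpace X] (act : G → X → X)

/-- `X × X` can be covered by `k` invariant open sets each admitting an
equivariant motion planner. -/
def eqTCcover (k : ℕ) : Prop :=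
  ∃ U : Fin k → Set (X × X),
    (∀ i, IsOpen (U i)) ∧ (⋃ i, U i) = univ ∧
    ∀ i, (∀ g p, p ∈ U i → (act g p.1, act g p.2) ∈ U i) ∧
      ∃ s : X × X → C(I, X),
        ContinuousOn s (U i) ∧
        (∀ p ∈ U i, s p 0 = p.1 ∧ s p 1 = p.2) ∧
        (∀ g p, p ∈ U i → ∀ t : I, s (act g p.1, act g p.2) t = act g (s p t))

/-- Equivariant topological complexity `TC_G` of Colman and Grant. -/
noncomputable def eqTC : ℕ∞ := minCover (eqTCcover act)

/-- `X × X` can be covered by `k` `(G × G)`-invariant open sets, each admitting a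
`(G × G)`-equivariant section of `π^G : P X ×_{X/G} P X → X × X`; such a section is
recorded by a pair of paths `s₁ p`, `s₂ p`, with the orbit of the endpoint of the first
equal to the orbit of the starting point of the second. -/
def invTCcover (k : ℕ) : Prop :=
  ∃ U : Fin k → Set (X × X),
    (∀ i, IsOpen (U i)) ∧ (⋃ i, U i) = univ ∧
    ∀ i, (∀ g₁ g₂ : G, ∀ p, p ∈ U i → (act g₁ p.1, act g₂ p.2) ∈ U i) ∧
      ∃ s₁ s₂ : X × X → C(I, X),
        ContinuousOn s₁ (U i) ∧ ContinuousOn s₂ (U i) ∧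
        (∀ p ∈ U i, s₁ p 0 = p.1 ∧ s₂ p 1 = p.2 ∧
          orbit act (s₁ p 1) = orbit act (s₂ p 0)) ∧
        (∀ g₁ g₂ : G, ∀ p, p ∈ U i → ∀ t : I,
          s₁ (act g₁ p.1, act g₂ p.2) t = act g₁ (s₁ p t) ∧
          s₂ (act g₁ p.1, act g₂ p.2) t = act g₂ (s₂ p t))

/-- Invariant topological complexity `TC^G` of Lubawski and Marzantowicz. -/
noncomputable def invTC : ℕ∞ := minCover (invTCcover act)

/-- The invariant open set `U` is `G`-compressible into `A`: the inclusion `U ↪ X` is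
`G`-equivariantly homotopic to a `G`-map with values in `A`. -/
def GCompressible (A : Set X) (U : Set X) : Prop :=
  (∀ g x, x ∈ U → act g x ∈ U) ∧
  ∃ H : X × I → X,
    ContinuousOn H (U ×ˢ (univ : Set I)) ∧ (∀ x ∈ U, H (x, 0) = x) ∧
    (∀ g x, x ∈ U → ∀ t : I, H (act g x, t) = act g (H (x, t))) ∧
    (∀ x ∈ U, H (x, 1) ∈ A)

/-- A `G`-categorical set: compressible into a single orbit. -/
def GCategorical (U : Set X) : Prop :=
  ∃ x₀ : X, GCompressible act (orbit act x₀) U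

/-- `X` can be covered by `k` open `G`-categorical sets. -/
def catGCover (k : ℕ) : Prop :=
  ∃ U : Fin k → Set X,
    (∀ i, IsOpen (U i)) ∧ (⋃ i, U i) = univ ∧ ∀ i, GCategorical act (U i)

/-- Equivariant Lusternik–Schnirelmann category `cat_G`. -/
noncomputable def catG : ℕ∞ := minCover (catGCover act)

/-- `X` can be covered by `k` open sets `G`-compressible into `{star}`. -/
def pointedCatGCover (star : X) (k : ℕ) : Prop :=
  ∃ U : Fin k → Set X,
    (∀ i, IsOpen (U i)) ∧ (⋃ i, U i) = univ ∧
    ∀ i, GCompressible act {star} (U i)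

/-- The pointed equivariant category `_{{⋆}}cat_G(X)`. -/
noncomputable def pointedCatG (star : X) : ℕ∞ := minCover (pointedCatGCover act star)

/-- `X` is `G`-contractible: the identity is `G`-homotopic to a map with values in a
single orbit. -/
def GContractible : Prop :=
  ∃ H : X × I → X,
    Continuous H ∧ (∀ x, H (x, 0) = x) ∧
    (∀ g x, ∀ t : I, H (act g x, t) = act g (H (x, t))) ∧
    ∃ x₀ : X, ∀ x, H (x, 1) ∈ orbit act x₀

end Equivariant

/-- The orbit space `X/G` with the quotient topology. -/
abbrev OrbitSpace (act : G → X → X) : Type _ := Quot (fun x y => ∃ g, act g x = y)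

end PaperTC
namespace PaperTC

/-- The unit sphere `S^n ⊆ ℝ^{n+1}` (with the Euclidean metric). -/
abbrev Sph (n : ℕ) : Set (EuclideanSpace ℝ (Fin (n + 1))) := Metric.sphere 0 1

/-- The action of `G` on the unit sphere `S^n` obtained by restricting an orthogonal
representation of `G` on `ℝ^{n+1}`. -/
noncomputable def sphereAct {G : Type*} [Monoid G] {n : ℕ}
    (ρ : G →* (EuclideanSpace ℝ (Fin (n + 1)) ≃ₗᵢ[ℝ] EuclideanSpace ℝ (Fin (n + 1)))) :
    G → ↥(Sph n) → ↥(Sph n) := fun g x =>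
  ⟨ρ g x, mem_sphere_zero_iff_norm.mpr (by
    rw [(ρ g).norm_map]; exact mem_sphere_zero_iff_norm.mp x.2)⟩

end PaperTC

open PaperTC Manifold

/-!
The complex quadratic form of `ℂ³` maps the unit sphere `S⁵` onto the closed unit disc. Its fibre
over a boundary point is a sphere `S²`, over an interior point a copy of `SO(3)`. Rotations of the
disc by odd roots of unity therefore lift to `S⁵`, and the lift can be chosen to fix the fibre
`ℝP³` over the centre. Cutting `S⁵` open at a fixed point and spinning it gives a smooth action on
`S^{l+5}`, whose fixed point set `F` is the spun `ℝP³`.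

A motion planner on `F` is obtained from an invariant one. Collapsing the spun directions gives a
map `F → ℝP³`, and there is a map `ℝP² → F` whose composite with it is a linear inclusion. A cover
of `F × F` by three sets with motion planners would give three functions on `S² × S²` which are odd
in both variables and have no common zero, although `(x + y)³ ≠ 0` in `H³(ℝP² × ℝP²; 𝔽₂)`. The
latter is proved by a Tucker-type argument on a triangulated cube.
-/

open ComplexConjugate
open scoped ContDiff

namespace SpunSphere

/-! ### A combinatorial cube lemma -/

section Labels

open Finset

/-- The labels `±1, ±2, ±3` of Tucker's lemma; the Boolean is `true` for the positive ones. -/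
abbrev Label := Fin 3 × Bool

/-- The opposite label. -/
def opp (x : Label) : Label := (x.1, !x.2)

/-- Two labels are compatible, i.e. may be carried by adjacent vertices, unless they are
opposite. -/
abbrev Compatible (x y : Label) : Prop := x ≠ opp y

/-- The mod 2 cochain that detects the positive labels. -/
def altZero (x : Label) : ZMod 2 := if x.2 then 1 else 0

/-- The mod 2 cochain that detects the unordered pairs `{+i, -j}` with `i < j`. -/
def altOne (x y : Label) : ZMod 2 :=
  let alt (x y : Label) : Bool := x.2 && !y.2 && decide (x.1 < y.1)
  if alt x y || alt y x then 1 else 0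

/-- The mod 2 cochain that detects the unordered triples `{+1, -2, +3}`. -/
def altTwo (x y z : Label) : ZMod 2 :=
  let alt (x y z : Label) : Bool := x = (0, true) && y = (1, false) && z = (2, true)
  if alt x y z || alt x z y || alt y x z || alt y z x || alt z x y || alt z y x then 1 else 0

theorem altOne_self : ∀ x : Label, altOne x x = 0 := by decide

theorem altOne_comm : ∀ x y : Label, altOne x y = altOne y x := by decide

theorem altTwo_rotate : ∀ x y z : Label, altTwo x y z = altTwo y z x := by decide

theorem altTwo_reverse : ∀ x y z : Label, altTwo x y z = altTwo z y x := by decide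

theorem altTwo_self_left : ∀ x y : Label, altTwo x x y = 0 := by decide

theorem altTwo_self_right : ∀ x y : Label, altTwo x y y = 0 := by decide

theorem altZero_add_opp : ∀ x : Label, altZero x + altZero (opp x) = 1 := by decide

theorem coboundary_altZero : ∀ x y : Label, Compatible x y →
    altZero x + altZero y = altOne x y + altOne (opp x) (opp y) := by decide

theorem coboundary_altOne : ∀ x y z : Label, Compatible x y → Compatible y z → Compatible x z →
    altOne x y + altOne y z + altOne x z = altTwo x y z + altTwo (opp x) (opp y) (opp z) := by
  decide

theorem coboundary_altTwo : ∀ x y z w : Label, [x, y, z, w].Pairwise Compatible →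
    altTwo y z w + altTwo x z w + altTwo x y w + altTwo x y z = 0 := by
  decide +kernel

/-- The value of `altTwo` on the square with vertices `a, b, c, d` (in the order `00, 10, 01, 11`),
cut along the diagonal `a d`. -/
def squareSum (a b c d : Label) : ZMod 2 := altTwo a b d + altTwo a c d

theorem squareSum_degenerate (a b : Label) : squareSum a b a b = 0 := by
  simp [squareSum, altTwo_self_left, altTwo_self_right]

theorem squareSum_flip {a b c d : Label} (hab : Compatible a b) (hac : Compatible a c)
    (had : Compatible a d) (hbc : Compatible b c) (hbd : Compatible b d) (hcd : Compatible c d) :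
    squareSum a b c d = squareSum c d a b := by
  have tetrahedron := coboundary_altTwo a b c d (by simp [*])
  have two := CharTwo.two_eq_zero (R := ZMod 2)
  rw [altTwo_rotate b c d, altTwo_reverse a b c, altTwo_rotate c b a, altTwo_reverse b a c]
    at tetrahedron
  unfold squareSum
  linear_combination tetrahedron - (altTwo c d b + altTwo c a b) * two

theorem squareSum_add_opp {a b c d : Label} (hab : Compatible a b) (hac : Compatible a c)
    (had : Compatible a d) (hbd : Compatible b d) (hcd : Compatible c d) :
    squareSum a b c d + squareSum (opp a) (opp b) (opp c) (opp d) =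
      (altOne a b + altOne c d) + (altOne a c + altOne b d) := by
  have two := CharTwo.two_eq_zero (R := ZMod 2)
  unfold squareSum
  linear_combination altOne a d * two - coboundary_altOne a b d hab hbd had -
    coboundary_altOne a c d hac hcd had

theorem sum_squareSum_cube (v : Fin 8 → Label) (hv : ∀ i j, Compatible (v i) (v j)) :
    (squareSum (v 0) (v 2) (v 1) (v 3) + squareSum (v 4) (v 6) (v 5) (v 7)) +
    (squareSum (v 0) (v 4) (v 1) (v 5) + squareSum (v 2) (v 6) (v 3) (v 7)) +
    (squareSum (v 0) (v 4) (v 2) (v 6) + squareSum (v 1) (v 5) (v 3) (v 7)) = 0 := by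
  have tetrahedron (i j) := coboundary_altTwo (v 0) (v i) (v j) (v 7) (by simp [hv])
  have two := CharTwo.two_eq_zero (R := ZMod 2)
  unfold squareSum
  linear_combination tetrahedron 1 3 + tetrahedron 1 5 + tetrahedron 2 3 + tetrahedron 2 6 +
    tetrahedron 4 5 + tetrahedron 4 6 - (altTwo (v 0) (v 1) (v 7) + altTwo (v 0) (v 2) (v 7) +
      altTwo (v 0) (v 3) (v 7) + altTwo (v 0) (v 4) (v 7) + altTwo (v 0) (v 5) (v 7) +
      altTwo (v 0) (v 6) (v 7)) * two

end Labels

section Grid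

open Finset

/-- Adjacency, equality included, of coordinates in a grid. -/
abbrev Near (i j : ℕ) : Prop := i ≤ j + 1 ∧ j ≤ i + 1

theorem sum_range_add_succ {R : Type*} [Ring R] [CharP R 2] (g : ℕ → R) (N : ℕ) :
    ∑ i ∈ range N, (g i + g (i + 1)) = g 0 + g N := by
  induction N with
  | zero => simp [CharTwo.add_self_eq_zero]
  | succ n ih =>
    rw [sum_range_succ, ih, add_assoc, ← add_assoc (g n), CharTwo.add_self_eq_zero, zero_add]

theorem sum_altOne_add_opp {g : ℕ → Label} (hg : ∀ i, Compatible (g i) (g (i + 1))) {N : ℕ}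
    (hN : g N = opp (g 0)) :
    ∑ i ∈ range N, (altOne (g i) (g (i + 1)) + altOne (opp (g i)) (opp (g (i + 1)))) = 1 := by
  simp_rw [← coboundary_altZero _ _ (hg _)]
  rw [sum_range_add_succ (fun i => altZero (g i)), hN, altZero_add_opp]

theorem sum_squareSum_add_opp {g : ℕ → ℕ → Label}
    (hg : ∀ i j i' j', Near i i' → Near j j' → Compatible (g i j) (g i' j')) (M N : ℕ) :
    ∑ i ∈ range M, ∑ j ∈ range N,
      (squareSum (g i j) (g (i + 1) j) (g i (j + 1)) (g (i + 1) (j + 1)) +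
        squareSum (opp (g i j)) (opp (g (i + 1) j)) (opp (g i (j + 1)))
          (opp (g (i + 1) (j + 1)))) =
      ∑ i ∈ range M, (altOne (g i 0) (g (i + 1) 0) + altOne (g i N) (g (i + 1) N)) +
        ∑ j ∈ range N, (altOne (g 0 j) (g 0 (j + 1)) + altOne (g M j) (g M (j + 1))) := by
  have square (i j : ℕ) := squareSum_add_opp (hg i j (i + 1) j (by omega) (by omega))
    (hg i j i (j + 1) (by omega) (by omega)) (hg i j (i + 1) (j + 1) (by omega) (by omega))
    (hg (i + 1) j (i + 1) (j + 1) (by omega) (by omega))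
    (hg i (j + 1) (i + 1) (j + 1) (by omega) (by omega))
  simp_rw [square, sum_add_distrib (f := fun _ => altOne _ _ + altOne _ _),
    sum_add_distrib (f := fun _ => ∑ _ ∈ _, _)]
  congr 1
  · exact sum_congr rfl fun i _ => sum_range_add_succ (fun j => altOne (g i j) (g (i + 1) j)) N
  · rw [sum_comm]
    exact sum_congr rfl fun j _ => sum_range_add_succ (fun i => altOne (g i j) (g i (j + 1))) M

/-- A labelling of the `N × N × N` grid that stands for a labelling of `S¹ × S²`, odd in each
factor: the first coordinate runs over half a circle, the second and third over half a sphere, with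
the poles at the ends of the second one. -/
structure TwistedLabelling (N : ℕ) (f : ℕ → ℕ → ℕ → Label) : Prop where
  compatible : ∀ i j k i' j' k', Near i i' → Near j j' → Near k k' →
    Compatible (f i j k) (f i' j' k')
  opp_fst : ∀ j k, f N j k = opp (f 0 j k)
  opp_snd : ∀ i j, f i j N = opp (f i (N - j) 0)
  pole_zero : ∀ i k, f i 0 k = f i 0 0
  pole_last : ∀ i k, f i N k = f i N 0

theorem sum_squareSum_boundary {f : ℕ → ℕ → ℕ → Label}
    (hf : ∀ i j k i' j' k', Near i i' → Near j j' → Near k k' →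
      Compatible (f i j k) (f i' j' k')) (N : ℕ) :
    let x i j k := squareSum (f i j k) (f i (j + 1) k) (f i j (k + 1)) (f i (j + 1) (k + 1))
    let y i j k := squareSum (f i j k) (f (i + 1) j k) (f i j (k + 1)) (f (i + 1) j (k + 1))
    let z i j k := squareSum (f i j k) (f (i + 1) j k) (f i (j + 1) k) (f (i + 1) (j + 1) k)
    ∑ j ∈ range N, ∑ k ∈ range N, (x 0 j k + x N j k) +
      ∑ i ∈ range N, ∑ k ∈ range N, (y i 0 k + y i N k) +
      ∑ i ∈ range N, ∑ j ∈ range N, (z i j 0 + z i j N) = 0 := by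
  intro x y z
  have cube (i j k : ℕ) : x i j k + x (i + 1) j k + (y i j k + y i (j + 1) k) +
      (z i j k + z i j (k + 1)) = 0 :=
    sum_squareSum_cube ![f i j k, f i j (k + 1), f i (j + 1) k, f i (j + 1) (k + 1),
      f (i + 1) j k, f (i + 1) j (k + 1), f (i + 1) (j + 1) k, f (i + 1) (j + 1) (k + 1)] (by
        intro a b
        fin_cases a <;> fin_cases b <;> exact hf _ _ _ _ _ _ (by omega) (by omega) (by omega))
  calc
    _ = ∑ j ∈ range N, ∑ k ∈ range N, ∑ i ∈ range N, (x i j k + x (i + 1) j k) +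
        ∑ i ∈ range N, ∑ k ∈ range N, ∑ j ∈ range N, (y i j k + y i (j + 1) k) +
        ∑ i ∈ range N, ∑ j ∈ range N, ∑ k ∈ range N, (z i j k + z i j (k + 1)) := by
      simp_rw [sum_range_add_succ (fun i => x i _ _), sum_range_add_succ (fun j => y _ j _),
        sum_range_add_succ (fun k => z _ _ k)]
    _ = ∑ i ∈ range N, ∑ j ∈ range N, ∑ k ∈ range N, (x i j k + x (i + 1) j k +
        (y i j k + y i (j + 1) k) + (z i j k + z i j (k + 1))) := by
      have outer (j : ℕ) : ∑ k ∈ range N, ∑ i ∈ range N, (x i j k + x (i + 1) j k) =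
          ∑ i ∈ range N, ∑ k ∈ range N, (x i j k + x (i + 1) j k) := sum_comm
      have inner (i : ℕ) : ∑ k ∈ range N, ∑ j ∈ range N, (y i j k + y i (j + 1) k) =
          ∑ j ∈ range N, ∑ k ∈ range N, (y i j k + y i (j + 1) k) := sum_comm
      rw [sum_congr rfl fun j _ => outer j, sum_comm, sum_congr rfl fun i _ => inner i]
      simp only [← sum_add_distrib]
    _ = 0 := by simp_rw [cube, sum_const_zero]

namespace TwistedLabelling

variable {N : ℕ} {f : ℕ → ℕ → ℕ → Label}

theorem sum_first_faces (h : TwistedLabelling N f) :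
    ∑ j ∈ range N, ∑ k ∈ range N,
      (squareSum (f 0 j k) (f 0 (j + 1) k) (f 0 j (k + 1)) (f 0 (j + 1) (k + 1)) +
        squareSum (f N j k) (f N (j + 1) k) (f N j (k + 1)) (f N (j + 1) (k + 1))) = 1 := by
  simp_rw [h.opp_fst, sum_squareSum_add_opp
    (fun j k j' k' => h.compatible 0 j k 0 j' k' (by omega)), h.pole_zero 0, h.pole_last 0,
    altOne_self, add_zero, sum_const_zero, add_zero]
  rw [sum_add_distrib, ← sum_range_reflect (fun j => altOne (f 0 j N) _), ← sum_add_distrib,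
    ← sum_altOne_add_opp (g := fun j => f 0 j 0) (N := N)
      (fun j => h.compatible _ _ _ _ _ _ (by omega) (by omega) (by omega))
      (by rw [← h.pole_last 0 N, h.opp_snd, Nat.sub_self])]
  refine sum_congr rfl fun j hj => ?_
  have hj := mem_range.mp hj
  rw [h.opp_snd, h.opp_snd, altOne_comm (opp _), show N - (N - 1 - j) = j + 1 by omega,
    show N - (N - 1 - j + 1) = j by omega]

theorem sum_third_faces (h : TwistedLabelling N f) :
    ∑ i ∈ range N, ∑ j ∈ range N,
      (squareSum (f i j 0) (f (i + 1) j 0) (f i (j + 1) 0) (f (i + 1) (j + 1) 0) +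
        squareSum (f i j N) (f (i + 1) j N) (f i (j + 1) N) (f (i + 1) (j + 1) N)) = 0 := by
  have reflected (i : ℕ) : ∑ j ∈ range N,
      squareSum (f i j N) (f (i + 1) j N) (f i (j + 1) N) (f (i + 1) (j + 1) N) =
      ∑ j ∈ range N, squareSum (opp (f i j 0)) (opp (f (i + 1) j 0)) (opp (f i (j + 1) 0))
        (opp (f (i + 1) (j + 1) 0)) := by
    rw [← sum_range_reflect]
    refine sum_congr rfl fun j hj => ?_
    have hj := mem_range.mp hj
    rw [squareSum_flip] <;> try exact h.compatible _ _ _ _ _ _ (by omega) (by omega) (by omega)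
    rw [h.opp_snd, h.opp_snd, h.opp_snd, h.opp_snd, show N - (N - 1 - j) = j + 1 by omega,
      show N - (N - 1 - j + 1) = j by omega]
  have last (i : ℕ) : f i N 0 = opp (f i 0 0) := by
    rw [← h.pole_last i N, h.opp_snd, Nat.sub_self]
  have one := CharTwo.add_self_eq_zero (1 : ZMod 2)
  simp_rw [sum_add_distrib, reflected, ← sum_add_distrib]
  rw [sum_squareSum_add_opp
    (fun i j i' j' hi hj => h.compatible i j 0 i' j' 0 hi hj (by omega))]
  simp_rw [last, h.opp_fst]
  rw [sum_altOne_add_opp (g := fun i => f i 0 0)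
      (fun i => h.compatible _ _ _ _ _ _ (by omega) (by omega) (by omega)) (h.opp_fst 0 0),
    sum_altOne_add_opp (g := fun j => f 0 j 0)
      (fun j => h.compatible _ _ _ _ _ _ (by omega) (by omega) (by omega)) (last 0), one]

theorem elim (h : TwistedLabelling N f) : False := by
  have zero (i k : ℕ) : squareSum (f i 0 k) (f (i + 1) 0 k) (f i 0 (k + 1))
      (f (i + 1) 0 (k + 1)) = 0 := by
    rw [h.pole_zero i k, h.pole_zero (i + 1) k, h.pole_zero i (k + 1), h.pole_zero (i + 1) (k + 1),
      squareSum_degenerate]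
  have last (i k : ℕ) : squareSum (f i N k) (f (i + 1) N k) (f i N (k + 1))
      (f (i + 1) N (k + 1)) = 0 := by
    rw [h.pole_last i k, h.pole_last (i + 1) k, h.pole_last i (k + 1), h.pole_last (i + 1) (k + 1),
      squareSum_degenerate]
  have boundary := sum_squareSum_boundary h.compatible N
  simp only [h.sum_first_faces, h.sum_third_faces, zero, last, add_zero, sum_const_zero,
    one_ne_zero] at boundary

end TwistedLabelling

end Grid

section Zeros

open Real

/-- The coordinate of a vector at which its supremum norm is attained. -/
noncomputable def maxIndex (v : Fin 3 → ℝ) : Fin 3 :=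
  (Finite.exists_max fun i => |v i|).choose

theorem abs_apply_maxIndex (v : Fin 3 → ℝ) : |v (maxIndex v)| = ‖v‖ :=
  le_antisymm (norm_le_pi_norm v _) ((pi_norm_le_iff_of_nonneg (abs_nonneg _)).mpr
    (Finite.exists_max fun i => |v i|).choose_spec)

theorem maxIndex_neg (v : Fin 3 → ℝ) : maxIndex (-v) = maxIndex v := by
  simp only [maxIndex, Pi.neg_apply, abs_neg]

/-- The label of a vector: a coordinate of maximal modulus, together with its sign. -/
noncomputable def label (v : Fin 3 → ℝ) : Label := (maxIndex v, decide (0 < v (maxIndex v)))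

theorem label_neg {v : Fin 3 → ℝ} (hv : v ≠ 0) : label (-v) = opp (label v) := by
  have hne : v (maxIndex v) ≠ 0 := by
    rwa [← abs_ne_zero, abs_apply_maxIndex, norm_ne_zero_iff]
  simp only [label, opp, maxIndex_neg, Pi.neg_apply, Left.neg_pos_iff, Prod.mk.injEq, true_and]
  rcases hne.lt_or_gt with h | h <;> simp [h, h.le]

theorem compatible_label {v w : Fin 3 → ℝ} (hvw : dist v w < ‖v‖ + ‖w‖) :
    Compatible (label v) (label w) := by
  intro h
  simp only [label, opp, Prod.mk.injEq, ← decide_not, decide_eq_decide, not_lt] at h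
  obtain ⟨hi, hsign⟩ := h
  have hv := abs_apply_maxIndex v
  have hw := abs_apply_maxIndex w
  have hdist := dist_le_pi_dist v w (maxIndex v)
  rw [← hi] at hw hsign
  rw [Real.dist_eq] at hdist
  rcases lt_or_ge 0 (v (maxIndex v)) with h | h
  · have hw' := hsign.mp h
    rw [abs_of_pos h] at hv
    rw [abs_of_nonpos hw'] at hw
    linarith [le_abs_self (v (maxIndex v) - w (maxIndex v))]
  · have hw' := not_le.mp fun h' => h.not_gt (hsign.mpr h')
    rw [abs_of_nonpos h] at hv
    rw [abs_of_pos hw'] at hw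
    linarith [neg_abs_le (v (maxIndex v) - w (maxIndex v))]

/-- The subdivision of `[0, 1]` into `N` equal intervals, continued by `1`. -/
noncomputable def gridPoint (N i : ℕ) : ℝ := (min i N : ℕ) / N

variable {N : ℕ}

theorem gridPoint_zero (N : ℕ) : gridPoint N 0 = 0 := by simp [gridPoint]

theorem gridPoint_self (hN : N ≠ 0) : gridPoint N N = 1 := by simp [gridPoint, hN]

theorem gridPoint_sub (hN : N ≠ 0) (i : ℕ) : gridPoint N (N - i) = 1 - gridPoint N i := by
  have hN' : (N : ℝ) ≠ 0 := mod_cast hN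
  have hmin : min (N - i) N = N - min i N := by omega
  rw [gridPoint, gridPoint, hmin, Nat.cast_sub (min_le_right _ _), sub_div, div_self hN']

theorem gridPoint_mem_Icc (N i : ℕ) : gridPoint N i ∈ Icc (0 : ℝ) 1 :=
  ⟨by unfold gridPoint; positivity, div_le_one_of_le₀ (mod_cast min_le_right _ _) (by positivity)⟩

theorem dist_gridPoint_le {i j : ℕ} (h : Near i j) :
    dist (gridPoint N i) (gridPoint N j) ≤ 1 / N := by
  have hle : (min i N : ℕ) ≤ ((min j N : ℕ) : ℝ) + 1 := by norm_cast; omega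
  have hge : (min j N : ℕ) ≤ ((min i N : ℕ) : ℝ) + 1 := by norm_cast; omega
  rw [gridPoint, gridPoint, Real.dist_eq, ← sub_div, abs_div, Nat.abs_cast]
  gcongr
  rw [abs_le]
  constructor <;> linarith

theorem exists_eq_zero_of_twisted {F : ℝ × ℝ × ℝ → Fin 3 → ℝ} (hF : Continuous F)
    (hfst : ∀ s r, F (1, s, r) = -F (0, s, r)) (hsnd : ∀ t s, F (t, s, 1) = -F (t, 1 - s, 0))
    (hzero : ∀ t r, F (t, 0, r) = F (t, 0, 0)) (hone : ∀ t r, F (t, 1, r) = F (t, 1, 0)) :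
    ∃ x, F x = 0 := by
  by_contra! hne
  have hK : IsCompact (Icc (0 : ℝ) 1 ×ˢ Icc (0 : ℝ) 1 ×ˢ Icc (0 : ℝ) 1) :=
    isCompact_Icc.prod (isCompact_Icc.prod isCompact_Icc)
  obtain ⟨c, hc, hcF⟩ := hK.exists_forall_le' hF.norm.continuousOn
    (fun x _ => norm_pos_iff.mpr (hne x))
  obtain ⟨δ, hδ, hdist⟩ := Metric.uniformContinuousOn_iff.mp
    (hK.uniformContinuousOn_of_continuous hF.continuousOn) c hc
  obtain ⟨m, hm⟩ := exists_nat_one_div_lt hδ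
  let x (i j k : ℕ) := (gridPoint (m + 1) i, gridPoint (m + 1) j, gridPoint (m + 1) k)
  have hx (i j k : ℕ) : x i j k ∈ Icc (0 : ℝ) 1 ×ˢ Icc (0 : ℝ) 1 ×ˢ Icc (0 : ℝ) 1 :=
    ⟨gridPoint_mem_Icc _ _, gridPoint_mem_Icc _ _, gridPoint_mem_Icc _ _⟩
  have hnear {i j : ℕ} (h : Near i j) :
      dist (gridPoint (m + 1) i) (gridPoint (m + 1) j) < δ :=
    (dist_gridPoint_le h).trans_lt (mod_cast hm)
  refine TwistedLabelling.elim (N := m + 1) (f := fun i j k => label (F (x i j k)))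
    ⟨fun i j k i' j' k' hi hj hk => compatible_label ?_, fun j k => ?_, fun i j => ?_,
      fun i k => ?_, fun i k => ?_⟩
  · have := hdist _ (hx i j k) _ (hx i' j' k')
      (max_lt (hnear hi) (max_lt (hnear hj) (hnear hk)))
    linarith [hcF _ (hx i j k), norm_nonneg (F (x i' j' k'))]
  · rw [← label_neg (hne _)]
    simp only [x, gridPoint_zero, gridPoint_self m.succ_ne_zero, hfst]
  · rw [← label_neg (hne _)]
    simp only [x, gridPoint_zero, gridPoint_self m.succ_ne_zero, gridPoint_sub m.succ_ne_zero, hsnd]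
  · simp only [x, gridPoint_zero, hzero _ (gridPoint _ _)]
  · simp only [x, gridPoint_zero, gridPoint_self m.succ_ne_zero, hone _ (gridPoint _ _)]

/-- Polar coordinates on the unit sphere of `ℝ³`, scaled so that `[0, 1] × [0, 1]` parametrizes
a hemisphere. -/
noncomputable def polarPoint (s r : ℝ) : Sph 2 :=
  ⟨!₂[cos (π * s), sin (π * s) * cos (π * r), sin (π * s) * sin (π * r)], by
    rw [mem_sphere_zero_iff_norm, EuclideanSpace.norm_eq, sqrt_eq_one]
    simp only [norm_eq_abs, sq_abs, Fin.sum_univ_three, Matrix.cons_val]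
    linear_combination sin (π * s) ^ 2 * sin_sq_add_cos_sq (π * r) + sin_sq_add_cos_sq (π * s)⟩

theorem continuous_polarPoint : Continuous fun x : ℝ × ℝ => polarPoint x.1 x.2 := by
  unfold polarPoint
  fun_prop

theorem polarPoint_zero_left (r : ℝ) : polarPoint 0 r = polarPoint 0 0 := by simp [polarPoint]

theorem polarPoint_one_left (r : ℝ) : polarPoint 1 r = polarPoint 1 0 := by simp [polarPoint]

theorem polarPoint_one_right (s : ℝ) : polarPoint s 1 = -polarPoint (1 - s) 0 := by
  ext i
  fin_cases i <;> simp [polarPoint, mul_sub, cos_pi_sub, sin_pi_sub]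

theorem polarPoint_one_zero : polarPoint 1 0 = -polarPoint 0 0 := by
  ext i
  fin_cases i <;> simp [polarPoint]

-- A great circle in the first factor suffices: `(x + y)³ = x y²` is already nonzero in the mod 2
-- cohomology of `ℝP¹ × ℝP²`.
theorem exists_eq_zero_of_odd_odd {f : Sph 2 × Sph 2 → Fin 3 → ℝ} (hf : Continuous f)
    (hfst : ∀ a b, f (-a, b) = -f (a, b)) (hsnd : ∀ a b, f (a, -b) = -f (a, b)) :
    ∃ x, f x = 0 := by
  obtain ⟨⟨t, s, r⟩, h⟩ := exists_eq_zero_of_twisted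
    (F := fun x => f (polarPoint x.1 0, polarPoint x.2.1 x.2.2))
    (hf.comp ((continuous_polarPoint.comp (continuous_fst.prodMk continuous_const)).prodMk
      (continuous_polarPoint.comp continuous_snd)))
    (fun s r => by simp only [polarPoint_one_zero, hfst])
    (fun t s => by simp only [polarPoint_one_right, hsnd])
    (fun t r => by simp only [polarPoint_zero_left r])
    (fun t r => by simp only [polarPoint_one_left r])
  exact ⟨_, h⟩

end Zeros

/-! ### Topological complexity -/

section Covers

theorem le_minCover {P : ℕ → Prop} {k : ℕ∞} (h : ∀ m : ℕ, 1 ≤ m → P m → k ≤ m) :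
    k ≤ minCover P := by
  refine le_sInf ?_
  rintro _ ⟨m, rfl, hm, hP⟩
  exact h m hm hP

theorem minCover_le_minCover {P Q : ℕ → Prop} (h : ∀ m, P m → Q m) : minCover Q ≤ minCover P :=
  sInf_le_sInf fun _ ⟨m, hk, hm, hP⟩ => ⟨m, hk, hm, h m hP⟩

theorem TCcover_mono {Y : Type*} [TopologicalSpace Y] {j k : ℕ} (hj : 1 ≤ j) (hjk : j ≤ k)
    (h : TCcover Y j) : TCcover Y k := by
  obtain ⟨U, hU, hcover, hs⟩ := h
  let retract (i : Fin k) : Fin j := ⟨min i (j - 1), by omega⟩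
  have hretract : Function.Surjective retract := fun i =>
    ⟨⟨i, i.2.trans_le hjk⟩, Fin.ext (min_eq_left (Nat.le_sub_one_of_lt i.2))⟩
  exact ⟨U ∘ retract, fun i => hU _, (hretract.iUnion_comp U).trans hcover, fun i => hs _⟩

theorem exists_motionPlanner {Y : Type*} [TopologicalSpace Y] {U : Set (Y × Y)}
    (γ : ∀ p : U, Path p.1.1 p.1.2) (hγ : Continuous ↿γ) :
    ∃ s : Y × Y → C(I, Y), ContinuousOn s U ∧ ∀ p ∈ U, s p 0 = p.1 ∧ s p 1 = p.2 := by
  classical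
  let c : C(U, C(I, Y)) := ContinuousMap.curry ⟨↿γ, hγ⟩
  refine ⟨fun p => if h : p ∈ U then c ⟨p, h⟩ else .const I p.1, ?_, fun p hp => ?_⟩
  · rw [continuousOn_iff_continuous_domRestrict]
    exact c.continuous.congr fun p => (by simp only [domRestrict_apply, p.2, ↓reduceDIte])
  · simp only [hp, ↓reduceDIte]
    exact ⟨(γ ⟨p, hp⟩).source, (γ ⟨p, hp⟩).target⟩

variable {G X : Type*} [TopologicalSpace X] {act : G → X → X}

-- A section of `π^G` over a pair of fixed points consists of two paths of fixed points, the second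
-- one starting where the first one ends: they can be concatenated.
theorem TCcover_fixedSet_of_invTCcover [Nonempty G] {k : ℕ} (h : invTCcover act k) :
    TCcover (fixedSet act) k := by
  obtain ⟨U, hU, hcover, hs⟩ := h
  have hincl : Continuous fun p : fixedSet act × fixedSet act => ((p.1 : X), (p.2 : X)) := by
    fun_prop
  refine ⟨fun i => {p | ((p.1 : X), (p.2 : X)) ∈ U i}, fun i => (hU i).preimage hincl, ?_,
    fun i => ?_⟩
  · rw [eq_univ_iff_forall] at hcover ⊢
    intro p
    obtain ⟨i, hi⟩ := mem_iUnion.mp (hcover (p.1, p.2))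
    exact mem_iUnion.mpr ⟨i, hi⟩
  obtain ⟨-, s₁, s₂, hs₁, hs₂, hends, hequiv⟩ := hs i
  let V : Set (fixedSet act × fixedSet act) := {p | ((p.1 : X), (p.2 : X)) ∈ U i}
  have hfix (p : V) (t : I) : s₁ (p.1.1, p.1.2) t ∈ fixedSet act ∧
      s₂ (p.1.1, p.1.2) t ∈ fixedSet act := by
    have hp (g : G) := hequiv g g _ p.2 t
    simp only [p.1.1.2 _, p.1.2.2 _] at hp
    exact ⟨fun g => (hp g).1.symm, fun g => (hp g).2.symm⟩
  have hmid (p : V) : s₁ (p.1.1, p.1.2) 1 = s₂ (p.1.1, p.1.2) 0 := by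
    obtain ⟨g⟩ := ‹Nonempty G›
    have hmem : s₁ (p.1.1, p.1.2) 1 ∈ orbit act (s₁ (p.1.1, p.1.2) 1) := ⟨g, (hfix p 1).1 g⟩
    rw [(hends _ p.2).2.2] at hmem
    obtain ⟨g', hg'⟩ := hmem
    rw [← hg', (hfix p 0).2 g']
  let first (p : V) : Path p.1.1 ⟨s₁ (p.1.1, p.1.2) 1, (hfix p 1).1⟩ :=
    { toFun t := ⟨s₁ (p.1.1, p.1.2) t, (hfix p t).1⟩
      source' := Subtype.ext (hends _ p.2).1
      target' := rfl }
  let second (p : V) : Path ⟨s₁ (p.1.1, p.1.2) 1, (hfix p 1).1⟩ p.1.2 :=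
    { toFun t := ⟨s₂ (p.1.1, p.1.2) t, (hfix p t).2⟩
      source' := Subtype.ext (hmid p).symm
      target' := Subtype.ext (hends _ p.2).2.1 }
  have hV : Continuous fun p : V => ((p.1.1 : X), (p.1.2 : X)) :=
    hincl.comp continuous_subtype_val
  refine exists_motionPlanner (fun p : V => (first p).trans (second p))
    (Path.trans_continuous_family first ?_ second ?_)
  · exact (((hs₁.comp_continuous hV fun p => p.2).comp continuous_fst).eval
      continuous_snd).subtype_mk _
  · exact (((hs₂.comp_continuous hV fun p => p.2).comp continuous_fst).eval
      continuous_snd).subtype_mk _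

theorem TC_fixedSet_le_invTC [Nonempty G] : TC (fixedSet act) ≤ invTC act :=
  minCover_le_minCover fun _ => TCcover_fixedSet_of_invTCcover

end Covers

section DoubleCover

variable {E B A Γ : Type*} [TopologicalSpace E] [TopologicalSpace B] [TopologicalSpace A]
  [Group Γ] [MulAction Γ E] {p : E → B}

theorem exists_isLocallyConstant_smul_eq [T2Space E] [Finite Γ] (hp : IsQuotientCoveringMap p Γ)
    {e e' : A → E} (he : Continuous e) (he' : Continuous e') (h : ∀ a, p (e' a) = p (e a)) :
    ∃ u : A → Γ, IsLocallyConstant u ∧ ∀ a, u a • e a = e' a := by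
  have := hp.isCancelSMul
  have := hp.toContinuousConstSMul
  choose u hu using fun a => hp.apply_eq_iff_mem_orbit.mp (h a)
  refine ⟨u, fun s => ?_, hu⟩
  have hpreimage (g : Γ) : u ⁻¹' {g} = {a | g • e a = e' a} := by
    ext a
    refine ⟨fun ha => ?_, fun ha => IsCancelSMul.right_cancel _ _ _ ((hu a).trans ha.symm)⟩
    rw [← mem_singleton_iff.mp ha]
    exact hu a
  rw [← compl_compl s, preimage_compl, isOpen_compl_iff, ← biUnion_preimage_singleton]
  refine (toFinite sᶜ).isClosed_biUnion fun g _ => ?_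
  rw [hpreimage]
  exact isClosed_eq (he.const_smul g) he'

theorem exists_equivariant_lift (hp : IsQuotientCoveringMap p Γ) (H : C(I × A, B)) (f : C(A, E))
    (hf : ∀ a, H (0, a) = p (f a)) :
    ∃ L : C(I × A, E), (∀ x, p (L x) = H x) ∧ (∀ a, L (0, a) = f a) ∧
      ∀ (g : Γ) (a a' : A), (∀ t, H (t, a') = H (t, a)) → f a' = g • f a →
        ∀ t, L (t, a') = g • L (t, a) := by
  have := hp.toContinuousConstSMul
  have hlift := fun x => congrFun (hp.isCoveringMap.liftHomotopy_lifts H f hf) x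
  have hstart := hp.isCoveringMap.liftHomotopy_zero H f hf
  refine ⟨hp.isCoveringMap.liftHomotopy H f hf, hlift, hstart, fun g a a' hH hfa t => ?_⟩
  generalize hp.isCoveringMap.liftHomotopy H f hf = L at hlift hstart
  refine congrFun (hp.isCoveringMap.eq_of_comp_eq (g₁ := fun t => L (t, a'))
    (g₂ := fun t => g • L (t, a)) (by fun_prop) (by fun_prop) (funext fun t => ?_) 0 ?_) t
  · simpa only [Function.comp_apply, hp.map_smul, hH] using (hlift (t, a')).trans
      ((hH t).trans (hlift (t, a)).symm)
  · rw [hstart, hstart, hfa]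

end DoubleCover

section LowerBound

variable {E B Y M : Type*} [TopologicalSpace E] [TopologicalSpace B] [TopologicalSpace Y]
  [TopologicalSpace M] [MulAction ℤˣ E] [T2Space E] {p : E → B} {q : Y → B} {φ : M → Y} {κ : M → E}

theorem exists_odd_odd_of_motionPlanner [Neg M] (hp : IsQuotientCoveringMap p ℤˣ)
    (hq : Continuous q) (hφ : Continuous φ) (hκ : Continuous κ) (hφ_neg : ∀ r, φ (-r) = φ r)
    (hκ_neg : ∀ r, κ (-r) = (-1 : ℤˣ) • κ r) (hqφ : ∀ r, q (φ r) = p (κ r))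
    {U : Set (Y × Y)} {s : Y × Y → C(I, Y)} (hs : ContinuousOn s U)
    (hends : ∀ y ∈ U, s y 0 = y.1 ∧ s y 1 = y.2) :
    ∃ ε : M × M → ℝ, ContinuousOn ε {a | (φ a.1, φ a.2) ∈ U} ∧ ∀ a b, (φ a, φ b) ∈ U →
      ε (a, b) ≠ 0 ∧ ε (-a, b) = -ε (a, b) ∧ ε (a, -b) = -ε (a, b) := by
  classical
  let A : Set (M × M) := {a | (φ a.1, φ a.2) ∈ U}
  have hP : Continuous fun a : A => (φ a.1.1, φ a.1.2) := by fun_prop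
  let H : C(I × A, B) := ⟨fun x => q (s (φ x.2.1.1, φ x.2.1.2) x.1), hq.comp
    (((hs.comp_continuous hP fun a => a.2).comp continuous_snd).eval continuous_fst)⟩
  obtain ⟨L, hL, -, hL_smul⟩ := exists_equivariant_lift hp H
    ⟨fun a : A => κ a.1.1, by fun_prop⟩ (fun a => by
      simp only [H, ContinuousMap.coe_mk, (hends _ a.2).1, hqφ])
  obtain ⟨u, hu, hu_smul⟩ := exists_isLocallyConstant_smul_eq hp
    (e := fun a : A => κ a.1.2) (e' := fun a => L (1, a)) (by fun_prop) (by fun_prop) (fun a => by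
      simp only [hL, H, ContinuousMap.coe_mk, (hends _ a.2).2, hqφ])
  have hcancel := hp.isCancelSMul
  refine ⟨fun a => if h : a ∈ A then ((u ⟨a, h⟩ : ℤ) : ℝ) else 0, ?_, fun a b hab => ?_⟩
  · rw [continuousOn_iff_continuous_domRestrict]
    exact (hu.comp fun v : ℤˣ => ((v : ℤ) : ℝ)).continuous.congr
      fun a => by simp only [domRestrict_apply, a.2, ↓reduceDIte, Function.comp_apply]
  have hfst : (-a, b) ∈ A := by simpa only [A, mem_ofPred_eq, hφ_neg] using hab
  have hsnd : (a, -b) ∈ A := by simpa only [A, mem_ofPred_eq, hφ_neg] using hab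
  have hu_fst : u ⟨(-a, b), hfst⟩ = -u ⟨(a, b), hab⟩ := by
    have hlift := hL_smul (-1) ⟨(a, b), hab⟩ ⟨(-a, b), hfst⟩
      (fun t => by simp only [H, ContinuousMap.coe_mk, hφ_neg]) (hκ_neg a) 1
    rw [← hu_smul, ← hu_smul, smul_smul] at hlift
    rw [IsCancelSMul.right_cancel _ _ _ hlift, neg_one_mul]
  have hu_snd : u ⟨(a, -b), hsnd⟩ = -u ⟨(a, b), hab⟩ := by
    have hlift := hL_smul 1 ⟨(a, b), hab⟩ ⟨(a, -b), hsnd⟩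
      (fun t => by simp only [H, ContinuousMap.coe_mk, hφ_neg]) (one_smul _ _).symm 1
    rw [← hu_smul, ← hu_smul, one_smul, hκ_neg, smul_smul] at hlift
    rw [← IsCancelSMul.right_cancel _ _ _ hlift, mul_neg_one, neg_neg]
  simp only [show (a, b) ∈ A from hab, hfst, hsnd, hu_fst, hu_snd, ↓reduceDIte, Units.val_neg,
    Int.cast_neg, and_self, and_true]
  exact mod_cast (u ⟨(a, b), hab⟩).ne_zero

theorem four_le_TC_of_isQuotientCoveringMap {φ : Sph 2 → Y} {κ : Sph 2 → E} [NormalSpace (Y × Y)]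
    (hp : IsQuotientCoveringMap p ℤˣ) (hq : Continuous q) (hφ : Continuous φ) (hκ : Continuous κ)
    (hφ_neg : ∀ r, φ (-r) = φ r) (hκ_neg : ∀ r, κ (-r) = (-1 : ℤˣ) • κ r)
    (hqφ : ∀ r, q (φ r) = p (κ r)) : 4 ≤ TC Y := by
  refine le_minCover fun m hm hcover => ?_
  by_contra! hlt
  have hm3 : m ≤ 3 := by
    have : m < 4 := mod_cast hlt
    omega
  obtain ⟨U, hU, hcover, hs⟩ := TCcover_mono hm hm3 hcover
  choose s hs hends using hs
  choose ε hε hε_odd using fun i => exists_odd_odd_of_motionPlanner hp hq hφ hκ hφ_neg hκ_neg hqφ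
    (hs i) (hends i)
  obtain ⟨ρ, hρ⟩ := PartitionOfUnity.exists_isSubordinate_of_locallyFinite isClosed_univ U hU
    (locallyFinite_of_finite U) hcover.ge
  let P (a : Sph 2 × Sph 2) : Y × Y := (φ a.1, φ a.2)
  have hP : Continuous P := by fun_prop
  have hρ_zero {i a} (ha : P a ∉ U i) : ρ i (P a) = 0 :=
    image_eq_zero_of_notMem_tsupport fun h => ha (hρ i h)
  let f (a : Sph 2 × Sph 2) (i : Fin 3) : ℝ := ρ i (P a) * ε i a
  have hf : Continuous f := by
    refine continuous_pi fun i => ContinuousOn.continuous_of_tsupport_subset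
      (((ρ i).continuous.comp hP).continuousOn.mul (hε i)) ((hU i).preimage hP) ?_
    exact (closure_mono (Function.support_mul_subset_left _ _)).trans
      ((tsupport_comp_subset_preimage (ρ i) hP).trans (preimage_mono (hρ i)))
  obtain ⟨a, ha⟩ := exists_eq_zero_of_odd_odd hf
    (fun a b => funext fun i => by
      by_cases h : P (a, b) ∈ U i
      · simp only [f, P, hφ_neg, (hε_odd i a b h).2.1, mul_neg, Pi.neg_apply]
      · have h' : P (-a, b) ∉ U i := by simpa only [P, hφ_neg] using h
        simp [f, hρ_zero h, hρ_zero h'])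
    (fun a b => funext fun i => by
      by_cases h : P (a, b) ∈ U i
      · simp only [f, P, hφ_neg, (hε_odd i a b h).2.2, mul_neg, Pi.neg_apply]
      · have h' : P (a, -b) ∉ U i := by simpa only [P, hφ_neg] using h
        simp [f, hρ_zero h, hρ_zero h'])
  obtain ⟨i, hi⟩ := ρ.exists_pos (mem_univ (P a))
  exact mul_ne_zero hi.ne' (hε_odd i a.1 a.2 (hρ i (subset_tsupport _ hi.ne'))).1 (congrFun ha i)

end LowerBound

/-! ### The complex quadratic space and its frames -/

section Smoothness

variable {E : Type*} [NormedAddCommGroup E] [NormedSpace ℝ E] {n : WithTop ℕ∞} {x : E}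

@[fun_prop]
theorem contDiffAt_ofReal {f : E → ℝ} (hf : ContDiffAt ℝ n f x) :
    ContDiffAt ℝ n (fun y => (f y : ℂ)) x :=
  Complex.ofRealCLM.contDiff.contDiffAt.comp x hf

@[fun_prop]
theorem contDiffAt_conj {f : E → ℂ} (hf : ContDiffAt ℝ n f x) :
    ContDiffAt ℝ n (fun y => conj (f y)) x :=
  Complex.conjCLE.contDiff.contDiffAt.comp x hf

@[fun_prop]
theorem contDiffAt_re {f : E → ℂ} (hf : ContDiffAt ℝ n f x) :
    ContDiffAt ℝ n (fun y => (f y).re) x :=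
  Complex.reCLM.contDiff.contDiffAt.comp x hf

@[fun_prop]
theorem contDiffAt_im {f : E → ℂ} (hf : ContDiffAt ℝ n f x) :
    ContDiffAt ℝ n (fun y => (f y).im) x :=
  Complex.imCLM.contDiff.contDiffAt.comp x hf

@[fun_prop]
theorem contDiffAt_normSq {f : E → ℂ} (hf : ContDiffAt ℝ n f x) :
    ContDiffAt ℝ n (fun y => Complex.normSq (f y)) x := by
  simp only [Complex.normSq_apply]
  fun_prop

@[fun_prop]
theorem contDiffAt_complex_div {f g : E → ℂ} (hf : ContDiffAt ℝ n f x) (hg : ContDiffAt ℝ n g x)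
    (hx : g x ≠ 0) : ContDiffAt ℝ n (fun y => f y / g y) x := by
  simp only [div_eq_mul_inv]
  exact hf.mul (hg.inv hx)

end Smoothness

/-- The complexification of Euclidean three-space. The coordinates are isotropic in the first two
directions, so that a maximal torus of the rotation group acts diagonally. -/
abbrev C3 : Type := ℂ × ℂ × ℂ

/-- The complex symmetric bilinear form of `C3`. -/
def bil : C3 →ₗ[ℂ] C3 →ₗ[ℂ] ℂ :=
  .mk₂ ℂ (fun u v => u.1 * v.2.1 + u.2.1 * v.1 + u.2.2 * v.2.2)
    (fun u u' v => by simp only [Prod.fst_add, Prod.snd_add]; ring)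
    (fun a u v => by simp only [Prod.smul_fst, Prod.smul_snd, smul_eq_mul]; ring)
    (fun u v v' => by simp only [Prod.fst_add, Prod.snd_add]; ring)
    (fun a u v => by simp only [Prod.smul_fst, Prod.smul_snd, smul_eq_mul]; ring)

/-- The complex bilinear extension of the vector product, in the coordinates of `C3` and up to a
constant factor. -/
def cross : C3 →ₗ[ℂ] C3 →ₗ[ℂ] C3 :=
  .mk₂ ℂ (fun u v => (u.2.2 * v.1 - u.1 * v.2.2, u.2.1 * v.2.2 - u.2.2 * v.2.1,
      u.1 * v.2.1 - u.2.1 * v.1))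
    (fun u u' v => by ext <;> simp only [Prod.fst_add, Prod.snd_add] <;> ring)
    (fun a u v => by ext <;> simp only [Prod.smul_fst, Prod.smul_snd, smul_eq_mul] <;> ring)
    (fun u v v' => by ext <;> simp only [Prod.fst_add, Prod.snd_add] <;> ring)
    (fun a u v => by ext <;> simp only [Prod.smul_fst, Prod.smul_snd, smul_eq_mul] <;> ring)

/-- The real structure of `C3`, in isotropic coordinates. -/
def bar : C3 →ₛₗ[starRingEnd ℂ] C3 where
  toFun z := (conj z.2.1, conj z.1, conj z.2.2)
  map_add' u v := by simp
  map_smul' a u := by simp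

/-- The squared norm of a vector of `C3`. -/
def sqNorm (z : C3) : ℝ := Complex.normSq z.1 + Complex.normSq z.2.1 + Complex.normSq z.2.2

/-- The quadratic form of `C3`. It maps the unit sphere onto the closed unit disc. -/
def quad (z : C3) : ℂ := bil z z

/-- The vector orthogonal to `z` and to its conjugate. -/
def normal (z : C3) : C3 := cross z (bar z)

/-- The Gram determinant of `z` and its conjugate. -/
def gramDet (z : C3) : ℝ := sqNorm z ^ 2 - Complex.normSq (quad z)

theorem bil_apply (u v : C3) : bil u v = u.1 * v.2.1 + u.2.1 * v.1 + u.2.2 * v.2.2 := rfl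

theorem cross_apply (u v : C3) : cross u v = (u.2.2 * v.1 - u.1 * v.2.2,
    u.2.1 * v.2.2 - u.2.2 * v.2.1, u.1 * v.2.1 - u.2.1 * v.1) := rfl

theorem bar_apply (z : C3) : bar z = (conj z.2.1, conj z.1, conj z.2.2) := rfl

theorem quad_apply (z : C3) : quad z = 2 * (z.1 * z.2.1) + z.2.2 ^ 2 := by
  rw [quad, bil_apply]
  ring

theorem bil_comm (u v : C3) : bil u v = bil v u := by
  simp only [bil_apply]
  ring

theorem bil_bar_bar (u v : C3) : bil (bar u) (bar v) = conj (bil u v) := by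
  simp only [bil_apply, bar_apply, map_add, map_mul]
  ring

theorem bar_bar (u : C3) : bar (bar u) = u := by
  simp [bar_apply]

theorem bil_bar_self (z : C3) : bil z (bar z) = sqNorm z := by
  simp only [bil_apply, bar_apply, sqNorm, Complex.ofReal_add, ← Complex.mul_conj]

theorem quad_smul (a : ℂ) (z : C3) : quad (a • z) = a ^ 2 * quad z := by
  simp only [quad, map_smul, LinearMap.smul_apply, smul_eq_mul]
  ring

theorem sqNorm_smul (a : ℂ) (z : C3) : sqNorm (a • z) = Complex.normSq a * sqNorm z := by
  simp only [sqNorm, Prod.smul_fst, Prod.smul_snd, smul_eq_mul, map_mul]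
  ring

theorem ofReal_gramDet (z : C3) : (gramDet z : ℂ) = sqNorm z ^ 2 - quad z * conj (quad z) := by
  simp only [gramDet, Complex.ofReal_sub, Complex.ofReal_pow, Complex.mul_conj]

theorem cross_self (u : C3) : cross u u = 0 := by
  simp only [cross_apply, mul_comm, sub_self, Prod.mk_zero_zero]

theorem cross_comm (u v : C3) : cross u v = -cross v u := by
  ext <;> simp only [cross_apply, Prod.fst_neg, Prod.snd_neg] <;> ring

theorem cross_cross (u v t : C3) : cross u (cross v t) = bil u v • t - bil u t • v := by
  ext <;> simp only [cross_apply, bil_apply, Prod.fst_sub, Prod.snd_sub, Prod.smul_fst,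
    Prod.smul_snd, smul_eq_mul] <;> ring

theorem bil_cross_cross (u v u' v' : C3) :
    bil (cross u v) (cross u' v') = bil u v' * bil v u' - bil u u' * bil v v' := by
  simp only [cross_apply, bil_apply]
  ring

theorem bar_normal (z : C3) : bar (normal z) = normal z := by
  ext <;> simp only [normal, cross_apply, bar_apply, map_sub, map_mul, Complex.conj_conj] <;> ring

theorem bil_self_normal (z : C3) : bil z (normal z) = 0 := by
  simp only [normal, cross_apply, bil_apply]
  ring

theorem bil_bar_normal (z : C3) : bil (bar z) (normal z) = 0 := by
  simp only [normal, cross_apply, bil_apply]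
  ring

theorem quad_normal (z : C3) : quad (normal z) = gramDet z := by
  rw [quad, normal, bil_cross_cross, bil_comm (bar z) z, bil_bar_bar, bil_bar_self, ofReal_gramDet,
    sq]
  rfl

/-- The linear combinations of `z`, its conjugate and their normal. -/
def frame (z : C3) : C3 →ₗ[ℂ] C3 where
  toFun c := c.1 • z + c.2.1 • bar z + c.2.2 • normal z
  map_add' c d := by simp only [Prod.fst_add, Prod.snd_add]; module
  map_smul' a c := by
    simp only [Prod.smul_fst, Prod.smul_snd, smul_eq_mul, RingHom.id_apply]; module

/-- The coordinates of a vector in the frame at `e`, which is a basis if `gramDet e ≠ 0`. -/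
noncomputable def coords (e : C3) : C3 →ₗ[ℂ] C3 where
  toFun u := ((sqNorm e * bil u (bar e) - conj (quad e) * bil u e) / gramDet e,
    (sqNorm e * bil u e - quad e * bil u (bar e)) / gramDet e, bil u (normal e) / gramDet e)
  map_add' u v := by
    ext <;> simp only [map_add, LinearMap.add_apply, Prod.fst_add, Prod.snd_add] <;> ring
  map_smul' a u := by
    ext <;> simp only [map_smul, LinearMap.smul_apply, smul_eq_mul, Prod.smul_fst, Prod.smul_snd,
      RingHom.id_apply] <;> ring

theorem frame_apply (z c : C3) : frame z c = c.1 • z + c.2.1 • bar z + c.2.2 • normal z := rfl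

theorem coords_apply (e u : C3) : coords e u =
    ((sqNorm e * bil u (bar e) - conj (quad e) * bil u e) / gramDet e,
    (sqNorm e * bil u e - quad e * bil u (bar e)) / gramDet e,
    bil u (normal e) / gramDet e) := rfl

theorem frame_one_zero_zero (z : C3) : frame z (1, 0, 0) = z := by
  simp [frame_apply]

theorem bar_frame (z c : C3) : bar (frame z c) = frame z (bar c) := by
  simp only [frame_apply, map_add, map_smulₛₗ, bar_bar, bar_normal, bar_apply c]
  abel

theorem bil_frame (z c d : C3) : bil (frame z c) (frame z d) = c.1 * d.1 * quad z +
    (c.1 * d.2.1 + c.2.1 * d.1) * sqNorm z + c.2.1 * d.2.1 * conj (quad z) +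
      c.2.2 * d.2.2 * gramDet z := by
  have hbar : bil (bar z) (bar z) = conj (quad z) := bil_bar_bar z z
  simp only [frame_apply, map_add, LinearMap.add_apply, map_smul, LinearMap.smul_apply, smul_eq_mul,
    bil_self_normal, bil_bar_normal, bil_comm (normal z) z,
    bil_comm (normal z) (bar z), bil_comm (bar z) z, bil_bar_self, hbar, ← quad.eq_1,
    quad_normal]
  ring

theorem cross_frame (z c d : C3) : cross (frame z c) (frame z d) =
    frame z
      (sqNorm z * (c.2.2 * d.1 - c.1 * d.2.2) + conj (quad z) * (c.2.2 * d.2.1 - c.2.1 * d.2.2),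
      quad z * (c.1 * d.2.2 - c.2.2 * d.1) + sqNorm z * (c.2.1 * d.2.2 - c.2.2 * d.2.1),
      c.1 * d.2.1 - c.2.1 * d.1) := by
  have hself : cross z (normal z) = quad z • bar z - (sqNorm z : ℂ) • z := by
    rw [normal, cross_cross, bil_bar_self, quad]
  have hbar : cross (bar z) (normal z) = (sqNorm z : ℂ) • bar z - conj (quad z) • z := by
    rw [normal, cross_cross, bil_bar_bar, bil_comm, bil_bar_self, quad]
  simp only [frame_apply, map_add, LinearMap.add_apply, map_smul, LinearMap.smul_apply, cross_self,
    cross_comm (normal z) z, cross_comm (normal z) (bar z), cross_comm (bar z) z, hself, hbar,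
    ← normal.eq_1]
  module

theorem frame_coords {e : C3} (he : gramDet e ≠ 0) (u : C3) : frame e (coords e u) = u := by
  have hne : (gramDet e : ℂ) ≠ 0 := Complex.ofReal_ne_zero.mpr he
  have hscaled : ((sqNorm e : ℂ) * bil u (bar e) - conj (quad e) * bil u e) • e +
      (sqNorm e * bil u e - quad e * bil u (bar e)) • bar e + bil u (normal e) • normal e =
        (gramDet e : ℂ) • u := by
    rw [ofReal_gramDet, ← bil_bar_self]
    ext <;> simp only [normal, quad, bil_apply, cross_apply, bar_apply, map_add, map_mul,
      Prod.fst_add, Prod.snd_add, Prod.smul_fst, Prod.smul_snd,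
      smul_eq_mul] <;> ring
  simp only [frame_apply, coords_apply, div_eq_inv_mul, mul_smul, ← smul_add, hscaled,
    inv_smul_smul₀ hne]

theorem coords_frame {e : C3} (he : gramDet e ≠ 0) (c : C3) : coords e (frame e c) = c := by
  have hinv : (coords e * frame e : Module.End ℂ C3) = 1 :=
    mul_eq_one_comm.mp (LinearMap.ext (frame_coords he))
  exact LinearMap.congr_fun hinv c

/-- The linear map carrying the frame at `e` to the frame at `z`. -/
noncomputable def transport (e z : C3) : C3 →ₗ[ℂ] C3 := frame z ∘ₗ coords e

theorem transport_frame {e : C3} (he : gramDet e ≠ 0) (z c : C3) :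
    transport e z (frame e c) = frame z c := by
  rw [transport, LinearMap.comp_apply, coords_frame he]

theorem transport_self {e : C3} (he : gramDet e ≠ 0) (z : C3) : transport e z e = z := by
  simpa only [frame_one_zero_zero] using transport_frame he z (1, 0, 0)

theorem transport_bar {e : C3} (he : gramDet e ≠ 0) (z u : C3) :
    transport e z (bar u) = bar (transport e z u) := by
  rw [← frame_coords he u]
  simp only [bar_frame, transport_frame he]

/-- The frames at `e` and `z` are bases with the same Gram matrix. -/
structure Congruent (e z : C3) : Prop where
  gramDet_ne_zero : gramDet e ≠ 0
  sqNorm_eq : sqNorm z = sqNorm e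
  quad_eq : quad z = quad e

namespace Congruent

variable {e z : C3} (h : Congruent e z)
include h

theorem bil_transport (u v : C3) : bil (transport e z u) (transport e z v) = bil u v := by
  rw [← frame_coords h.gramDet_ne_zero u, ← frame_coords h.gramDet_ne_zero v]
  simp only [transport_frame h.gramDet_ne_zero, bil_frame, gramDet, h.sqNorm_eq, h.quad_eq]

theorem cross_transport (u v : C3) :
    cross (transport e z u) (transport e z v) = transport e z (cross u v) := by
  rw [← frame_coords h.gramDet_ne_zero u, ← frame_coords h.gramDet_ne_zero v]
  simp only [transport_frame h.gramDet_ne_zero, cross_frame, h.sqNorm_eq, h.quad_eq]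

theorem quad_transport (u : C3) : quad (transport e z u) = quad u :=
  h.bil_transport u u

theorem sqNorm_transport (u : C3) : sqNorm (transport e z u) = sqNorm u := by
  have hbil := h.bil_transport u (bar u)
  rw [transport_bar h.gramDet_ne_zero, bil_bar_self, bil_bar_self] at hbil
  exact mod_cast hbil

theorem frame_transport (u c : C3) : frame (transport e z u) c = transport e z (frame u c) := by
  simp only [frame_apply, map_add, map_smul, normal, ← transport_bar h.gramDet_ne_zero,
    h.cross_transport]

theorem transport_transport {u : C3} (hu : gramDet u ≠ 0) (v : C3) :
    transport u (transport e z u) v = transport e z v := by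
  rw [← frame_coords hu v, transport_frame hu, h.frame_transport]

end Congruent

section Smoothness

variable {E : Type*} [NormedAddCommGroup E] [NormedSpace ℝ E] {n : WithTop ℕ∞} {f g : E → C3}
  {x : E}

@[fun_prop]
theorem contDiffAt_bil (hf : ContDiffAt ℝ n f x) (hg : ContDiffAt ℝ n g x) :
    ContDiffAt ℝ n (fun y => bil (f y) (g y)) x := by
  simp only [bil_apply]
  fun_prop

@[fun_prop]
theorem contDiffAt_quad (hf : ContDiffAt ℝ n f x) : ContDiffAt ℝ n (fun y => quad (f y)) x :=
  contDiffAt_bil hf hf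

@[fun_prop]
theorem contDiffAt_bar (hf : ContDiffAt ℝ n f x) : ContDiffAt ℝ n (fun y => bar (f y)) x := by
  simp only [bar_apply]
  fun_prop

@[fun_prop]
theorem contDiffAt_sqNorm (hf : ContDiffAt ℝ n f x) : ContDiffAt ℝ n (fun y => sqNorm (f y)) x := by
  unfold sqNorm
  fun_prop

@[fun_prop]
theorem contDiffAt_normal (hf : ContDiffAt ℝ n f x) : ContDiffAt ℝ n (fun y => normal (f y)) x := by
  simp only [normal, cross_apply]
  fun_prop

theorem contDiffAt_transport {u : E → C3} (hf : ContDiffAt ℝ n f x) (hg : ContDiffAt ℝ n g x)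
    (hu : ContDiffAt ℝ n u x) (hx : gramDet (f x) ≠ 0) :
    ContDiffAt ℝ n (fun y => transport (f y) (g y) (u y)) x := by
  have hgram : ContDiffAt ℝ n (fun y => (gramDet (f y) : ℂ)) x := by
    unfold gramDet
    fun_prop
  have hne : (gramDet (f x) : ℂ) ≠ 0 := Complex.ofReal_ne_zero.mpr hx
  simp only [transport, LinearMap.comp_apply, frame_apply, coords_apply]
  fun_prop (disch := assumption)

end Smoothness

/-! ### A section of the quadratic form over the open disc -/

/-- A square root of `-2`. -/
noncomputable def sqrtNegTwo : ℂ := Complex.I * √2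

theorem sqrtNegTwo_sq : sqrtNegTwo ^ 2 = -2 := by
  rw [sqrtNegTwo, mul_pow, Complex.I_sq, ← Complex.ofReal_pow, Real.sq_sqrt zero_le_two]
  norm_num

theorem conj_sqrtNegTwo : conj sqrtNegTwo = -sqrtNegTwo := by
  simp [sqrtNegTwo]

theorem normSq_sqrtNegTwo : Complex.normSq sqrtNegTwo = 2 := by
  simp [sqrtNegTwo]

/-- The image of `(u.1, u.2, 0)` under the rotation covered by the matrix of `SU(2)` with first
column `(p, q)`. -/
noncomputable def twist (p : ℂ) (q : ℝ) (u : ℂ × ℂ) : C3 :=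
  (conj p ^ 2 * u.2 + q ^ 2 * u.1, q ^ 2 * u.2 + p ^ 2 * u.1,
    sqrtNegTwo * q * (p * u.1 - conj p * u.2))

theorem quad_twist {p : ℂ} {q : ℝ} (h : Complex.normSq p + q ^ 2 = 1) (u : ℂ × ℂ) :
    quad (twist p q u) = 2 * (u.1 * u.2) := by
  have hpq : p * conj p + q ^ 2 = 1 := by
    rw [Complex.mul_conj]
    exact mod_cast h
  simp only [quad_apply, twist]
  linear_combination (q * (p * u.1 - conj p * u.2)) ^ 2 * sqrtNegTwo_sq +
    2 * u.1 * u.2 * (p * conj p + q ^ 2 + 1) * hpq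

theorem sqNorm_twist {p : ℂ} {q : ℝ} (h : Complex.normSq p + q ^ 2 = 1) (u : ℂ × ℂ) :
    sqNorm (twist p q u) = Complex.normSq u.1 + Complex.normSq u.2 := by
  have hpq : p * conj p + q ^ 2 = 1 := by
    rw [Complex.mul_conj]
    exact mod_cast h
  rw [← Complex.ofReal_inj, ← bil_bar_self]
  simp only [bil_apply, bar_apply, twist, map_add, map_mul, map_pow, map_sub, conj_sqrtNegTwo,
    Complex.conj_conj, Complex.conj_ofReal, Complex.ofReal_add, ← Complex.mul_conj]
  linear_combination (-q ^ 2 * (p * u.1 - conj p * u.2) * (conj p * conj u.1 - p * conj u.2)) *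
    sqrtNegTwo_sq + (u.1 * conj u.1 + u.2 * conj u.2) * (p * conj p + q ^ 2 + 1) * hpq

/-- The square root of `1 - |w|²`. -/
noncomputable def height (w : ℂ) : ℝ := √(1 - Complex.normSq w)

/-- The first coordinate of the section `w ↦ (secB w, secA w, 0)` of `quad`. -/
noncomputable def secB (w : ℂ) : ℝ := √((1 + height w) / 2)

/-- The second coordinate of the section `w ↦ (secB w, secA w, 0)` of `quad`. -/
noncomputable def secA (w : ℂ) : ℂ := w / (2 * secB w)

/-- A smooth cutoff function vanishing on the disc of radius `1/2`. -/
noncomputable def outerCutoff (w : ℂ) : ℝ := Real.smoothTransition (4 * Complex.normSq w - 1)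

/-- A smooth cutoff function vanishing outside of the disc of radius `√3/2`. -/
noncomputable def innerCutoff (w : ℂ) : ℝ := Real.smoothTransition (3 - 4 * Complex.normSq w)

/-- The norm of the vector `(outerCutoff w * w ^ j, innerCutoff w)`. -/
noncomputable def twistNorm (j : ℕ) (w : ℂ) : ℝ :=
  √(outerCutoff w ^ 2 * Complex.normSq w ^ j + innerCutoff w ^ 2)

/-- The first entry of the matrix of `SU(2)` twisting the section of `quad` over `w`. -/
noncomputable def twistP (j : ℕ) (w : ℂ) : ℂ := outerCutoff w * w ^ j / twistNorm j w

/-- The second entry of the matrix of `SU(2)` twisting the section of `quad` over `w`. -/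
noncomputable def twistQ (j : ℕ) (w : ℂ) : ℝ := innerCutoff w / twistNorm j w

/-- A section of `quad` over the open disc, with values in the unit sphere. The twist makes it
equivariant near the boundary of the disc, see `baseSection_mul`. -/
noncomputable def baseSection (j : ℕ) (w : ℂ) : C3 :=
  twist (twistP j w) (twistQ j w) (secB w, secA w)

theorem height_nonneg (w : ℂ) : 0 ≤ height w := Real.sqrt_nonneg _

theorem height_pos {w : ℂ} (hw : Complex.normSq w < 1) : 0 < height w :=
  Real.sqrt_pos.mpr (sub_pos.mpr hw)

theorem height_sq {w : ℂ} (hw : Complex.normSq w < 1) : height w ^ 2 = 1 - Complex.normSq w :=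
  Real.sq_sqrt (sub_nonneg.mpr hw.le)

theorem secB_pos (w : ℂ) : 0 < secB w :=
  Real.sqrt_pos.mpr (by linarith [height_nonneg w])

theorem secB_sq (w : ℂ) : secB w ^ 2 = (1 + height w) / 2 :=
  Real.sq_sqrt (by linarith [height_nonneg w])

theorem two_mul_secB_mul_secA (w : ℂ) : 2 * (secB w * secA w) = w := by
  have hne : (secB w : ℂ) ≠ 0 := Complex.ofReal_ne_zero.mpr (secB_pos w).ne'
  rw [secA]
  field_simp

theorem normSq_secA {w : ℂ} (hw : Complex.normSq w < 1) :
    Complex.normSq (secA w) = (1 - height w) / 2 := by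
  have hpos := height_pos hw
  have hnormSq : Complex.normSq (secA w) = Complex.normSq w / (2 * (1 + height w)) := by
    rw [secA, map_div₀, map_mul, Complex.normSq_ofReal, ← sq, secB_sq, Complex.normSq_ofNat]
    ring
  rw [hnormSq, div_eq_div_iff (by positivity) two_ne_zero]
  linear_combination 2 * height_sq hw

theorem twistNorm_radicand_pos (j : ℕ) (w : ℂ) :
    0 < outerCutoff w ^ 2 * Complex.normSq w ^ j + innerCutoff w ^ 2 := by
  have hnonneg := Complex.normSq_nonneg w
  rcases lt_or_ge (Complex.normSq w) (3 / 4) with h | h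
  · have : 0 < innerCutoff w := Real.smoothTransition.pos_of_pos (by linarith)
    positivity
  · have : 0 < outerCutoff w := Real.smoothTransition.pos_of_pos (by linarith)
    have : 0 < Complex.normSq w := by linarith
    positivity

theorem twistNorm_pos (j : ℕ) (w : ℂ) : 0 < twistNorm j w :=
  Real.sqrt_pos.mpr (twistNorm_radicand_pos j w)

theorem normSq_twistP_add_twistQ_sq (j : ℕ) (w : ℂ) :
    Complex.normSq (twistP j w) + twistQ j w ^ 2 = 1 := by
  rw [twistP, twistQ, map_div₀, map_mul, map_pow, Complex.normSq_ofReal, Complex.normSq_ofReal,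
    div_pow, ← sq, ← sq, ← add_div, twistNorm, Real.sq_sqrt (twistNorm_radicand_pos j w).le,
    div_self (twistNorm_radicand_pos j w).ne']

theorem quad_baseSection (j : ℕ) (w : ℂ) : quad (baseSection j w) = w := by
  rw [baseSection, quad_twist (normSq_twistP_add_twistQ_sq j w), two_mul_secB_mul_secA]

theorem sqNorm_baseSection (j : ℕ) {w : ℂ} (hw : Complex.normSq w < 1) :
    sqNorm (baseSection j w) = 1 := by
  rw [baseSection, sqNorm_twist (normSq_twistP_add_twistQ_sq j w), normSq_secA hw,
    Complex.normSq_ofReal, ← sq, secB_sq]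
  ring

theorem gramDet_baseSection_ne_zero (j : ℕ) {w : ℂ} (hw : Complex.normSq w < 1) :
    gramDet (baseSection j w) ≠ 0 := by
  rw [gramDet, sqNorm_baseSection j hw, quad_baseSection, one_pow]
  exact (sub_pos.mpr hw).ne'

theorem normSq_circle_mul (ζ : Circle) (w : ℂ) : Complex.normSq (ζ * w) = Complex.normSq w := by
  rw [map_mul, Circle.normSq_coe, one_mul]

theorem height_mul (ζ : Circle) (w : ℂ) : height (ζ * w) = height w := by
  rw [height, height, normSq_circle_mul]

theorem secB_mul (ζ : Circle) (w : ℂ) : secB (ζ * w) = secB w := by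
  rw [secB, secB, height_mul]

theorem secA_mul (ζ : Circle) (w : ℂ) : secA (ζ * w) = ζ * secA w := by
  rw [secA, secA, secB_mul, mul_div_assoc]

theorem twistP_mul (j : ℕ) (ζ : Circle) (w : ℂ) : twistP j (ζ * w) = ζ ^ j * twistP j w := by
  simp only [twistP, twistNorm, outerCutoff, innerCutoff, normSq_circle_mul]
  ring

theorem twistQ_eq_zero (j : ℕ) {w : ℂ} (hw : 3 / 4 ≤ Complex.normSq w) : twistQ j w = 0 := by
  rw [twistQ, innerCutoff, Real.smoothTransition.zero_of_nonpos (by linarith), zero_div]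

theorem baseSection_mul {j : ℕ} {ζ : Circle} (hζ : ζ ^ (4 * j) = ζ) {w : ℂ}
    (hw : 3 / 4 ≤ Complex.normSq w) :
    baseSection j (ζ * w) = (ζ : ℂ) ^ (2 * j) • baseSection j w := by
  have hinv : (ζ ^ (2 * j))⁻¹ * ζ = ζ ^ (2 * j) := by
    rw [inv_mul_eq_iff_eq_mul, ← pow_add, ← two_mul, ← mul_assoc]
    exact hζ.symm
  have hconj : conj (ζ : ℂ) ^ (2 * j) * ζ = (ζ : ℂ) ^ (2 * j) := by
    rw [← Circle.coe_inv_eq_conj]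
    simpa using congrArg ((↑) : Circle → ℂ) hinv
  rw [baseSection, baseSection, twistP_mul, secA_mul, secB_mul, twistQ_eq_zero j hw,
    twistQ_eq_zero j (by rwa [normSq_circle_mul])]
  ext
  · simp only [twist, Prod.smul_fst, smul_eq_mul, ← hconj]
    simp only [map_mul, map_pow, Complex.ofReal_zero, ne_eq, OfNat.ofNat_ne_zero,
      not_false_eq_true, zero_pow, zero_mul, add_zero]
    ring
  · simp only [twist, map_mul, map_pow, Complex.ofReal_zero, ne_eq, OfNat.ofNat_ne_zero,
      not_false_eq_true, zero_pow, zero_mul, add_zero, zero_add, mul_zero, Prod.smul_mk,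
      smul_eq_mul]
    ring
  · simp [twist]

theorem baseSection_of_normSq_le (j : ℕ) {w : ℂ} (hw : Complex.normSq w ≤ 1 / 4) :
    baseSection j w = (↑(secB w), secA w, 0) := by
  have houter : outerCutoff w = 0 := Real.smoothTransition.zero_of_nonpos (by linarith)
  have hinner : innerCutoff w = 1 := Real.smoothTransition.one_of_one_le (by linarith)
  simp [baseSection, twist, twistP, twistQ, twistNorm, houter, hinner]

section Smoothness

variable {n : ℕ∞} {w : ℂ}

theorem contDiffAt_height (hw : Complex.normSq w < 1) : ContDiffAt ℝ n height w := by
  unfold height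
  exact ContDiffAt.sqrt (by fun_prop) (sub_pos.mpr hw).ne'

theorem contDiffAt_secB (hw : Complex.normSq w < 1) : ContDiffAt ℝ n secB w := by
  have hheight : ContDiffAt ℝ n height w := contDiffAt_height hw
  unfold secB
  exact ContDiffAt.sqrt (by fun_prop) (by linarith [height_nonneg w])

theorem contDiffAt_secA (hw : Complex.normSq w < 1) : ContDiffAt ℝ n secA w := by
  have hB : ContDiffAt ℝ n secB w := contDiffAt_secB hw
  have hne : (2 * secB w : ℂ) ≠ 0 := mod_cast (mul_pos two_pos (secB_pos w)).ne'
  unfold secA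
  fun_prop (disch := assumption)

theorem contDiffAt_outerCutoff : ContDiffAt ℝ n outerCutoff w :=
  Real.smoothTransition.contDiffAt.comp w (by fun_prop)

theorem contDiffAt_innerCutoff : ContDiffAt ℝ n innerCutoff w :=
  Real.smoothTransition.contDiffAt.comp w (by fun_prop)

theorem contDiffAt_twistNorm (j : ℕ) : ContDiffAt ℝ n (twistNorm j) w := by
  have houter : ContDiffAt ℝ n outerCutoff w := contDiffAt_outerCutoff
  have hinner : ContDiffAt ℝ n innerCutoff w := contDiffAt_innerCutoff
  unfold twistNorm
  exact ContDiffAt.sqrt (by fun_prop) (twistNorm_radicand_pos j w).ne'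

theorem contDiffAt_baseSection (j : ℕ) (hw : Complex.normSq w < 1) :
    ContDiffAt ℝ n (baseSection j) w := by
  have hA : ContDiffAt ℝ n secA w := contDiffAt_secA hw
  have hB : ContDiffAt ℝ n secB w := contDiffAt_secB hw
  have houter : ContDiffAt ℝ n outerCutoff w := contDiffAt_outerCutoff
  have hinner : ContDiffAt ℝ n innerCutoff w := contDiffAt_innerCutoff
  have hnorm : ContDiffAt ℝ n (twistNorm j) w := contDiffAt_twistNorm j
  have hne : twistNorm j w ≠ 0 := (twistNorm_pos j w).ne'
  have hne' : (twistNorm j w : ℂ) ≠ 0 := Complex.ofReal_ne_zero.mpr hne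
  have hP : ContDiffAt ℝ n (twistP j) w := by
    unfold twistP
    fun_prop (disch := assumption)
  have hQ : ContDiffAt ℝ n (twistQ j) w := by
    unfold twistQ
    exact hinner.div hnorm hne
  unfold baseSection twist
  fun_prop

end Smoothness

/-! ### Lifting the rotations of the disc to the five-sphere -/

theorem congruent_baseSection (j : ℕ) {z : C3} (hz : sqNorm z = 1)
    (hw : Complex.normSq (quad z) < 1) : Congruent (baseSection j (quad z)) z where
  gramDet_ne_zero := gramDet_baseSection_ne_zero j hw
  sqNorm_eq := by rw [hz, sqNorm_baseSection j hw]
  quad_eq := (quad_baseSection j _).symm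

theorem transport_baseSection_self (j : ℕ) {z : C3} (hw : Complex.normSq (quad z) < 1) :
    transport (baseSection j (quad z)) z (baseSection j (quad z)) = z :=
  transport_self (gramDet_baseSection_ne_zero j hw) z

open Classical in
/-- The lift through `quad` of the rotation by `ζ` of the unit disc, transporting the displacement
of `baseSection` to the other points of the fibres. Outside of the open disc the formula is the one
which `baseSection_mul` yields near the boundary. -/
noncomputable def rotate (j : ℕ) (ζ : Circle) (z : C3) : C3 :=
  if Complex.normSq (quad z) < 1 then
    transport (baseSection j (quad z)) z (baseSection j (ζ * quad z))
  else (ζ : ℂ) ^ (2 * j) • z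

theorem rotate_of_lt (j : ℕ) (ζ : Circle) {z : C3} (hw : Complex.normSq (quad z) < 1) :
    rotate j ζ z = transport (baseSection j (quad z)) z (baseSection j (ζ * quad z)) :=
  if_pos hw

theorem rotate_of_not_lt (j : ℕ) (ζ : Circle) {z : C3} (hw : ¬Complex.normSq (quad z) < 1) :
    rotate j ζ z = (ζ : ℂ) ^ (2 * j) • z :=
  if_neg hw

theorem rotate_one (j : ℕ) (z : C3) : rotate j 1 z = z := by
  by_cases hw : Complex.normSq (quad z) < 1
  · rw [rotate_of_lt j 1 hw, Circle.coe_one, one_mul, transport_baseSection_self j hw]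
  · rw [rotate_of_not_lt j 1 hw, Circle.coe_one, one_pow, one_smul]

theorem sqNorm_rotate (j : ℕ) (ζ : Circle) {z : C3} (hz : sqNorm z = 1) :
    sqNorm (rotate j ζ z) = 1 := by
  by_cases hw : Complex.normSq (quad z) < 1
  · rw [rotate_of_lt j ζ hw, (congruent_baseSection j hz hw).sqNorm_transport,
      sqNorm_baseSection j (by rwa [normSq_circle_mul])]
  · rw [rotate_of_not_lt j ζ hw, sqNorm_smul, map_pow, Circle.normSq_coe, one_pow, one_mul, hz]

theorem rotate_of_three_fourths_le {j : ℕ} {ζ : Circle} (hζ : ζ ^ (4 * j) = ζ) {z : C3}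
    (hw : 3 / 4 ≤ Complex.normSq (quad z)) : rotate j ζ z = (ζ : ℂ) ^ (2 * j) • z := by
  by_cases hw' : Complex.normSq (quad z) < 1
  · rw [rotate_of_lt j ζ hw', baseSection_mul hζ hw, map_smul, transport_baseSection_self j hw']
  · exact rotate_of_not_lt j ζ hw'

theorem quad_rotate {j : ℕ} {ζ : Circle} (hζ : ζ ^ (4 * j) = ζ) {z : C3} (hz : sqNorm z = 1) :
    quad (rotate j ζ z) = ζ * quad z := by
  by_cases hw : Complex.normSq (quad z) < 1
  · rw [rotate_of_lt j ζ hw, (congruent_baseSection j hz hw).quad_transport, quad_baseSection]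
  · have hpow : ((ζ : ℂ) ^ (2 * j)) ^ 2 = ζ := by
      rw [← pow_mul, mul_right_comm, ← Circle.coe_pow, show 2 * 2 * j = 4 * j from rfl, hζ]
    rw [rotate_of_not_lt j ζ hw, quad_smul, hpow]

theorem rotate_rotate {j : ℕ} {ζ : Circle} (hζ : ζ ^ (4 * j) = ζ) (ξ : Circle) {z : C3}
    (hz : sqNorm z = 1) : rotate j ξ (rotate j ζ z) = rotate j (ξ * ζ) z := by
  have hquad := quad_rotate hζ hz
  by_cases hw : Complex.normSq (quad z) < 1
  · have hw' : Complex.normSq (ζ * quad z) < 1 := by rwa [normSq_circle_mul]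
    rw [rotate_of_lt j ξ (by rwa [hquad]), hquad, rotate_of_lt j ζ hw,
      (congruent_baseSection j hz hw).transport_transport (gramDet_baseSection_ne_zero j hw'),
      rotate_of_lt j (ξ * ζ) hw, Circle.coe_mul, mul_assoc]
  · rw [rotate_of_not_lt j ξ (by rwa [hquad, normSq_circle_mul]), rotate_of_not_lt j ζ hw,
      rotate_of_not_lt j (ξ * ζ) hw, smul_smul, Circle.coe_mul, mul_pow]

theorem continuous_quad : Continuous quad := by
  simp only [funext quad_apply]
  fun_prop

theorem continuous_normSq_quad : Continuous fun z => Complex.normSq (quad z) :=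
  Complex.continuous_normSq.comp continuous_quad

theorem contDiff_rotate {j : ℕ} {ζ : Circle} (hζ : ζ ^ (4 * j) = ζ) (n : ℕ∞) :
    ContDiff ℝ n (rotate j ζ) := by
  refine contDiff_iff_contDiffAt.mpr fun z => ?_
  by_cases hw : Complex.normSq (quad z) < 1
  · have hlocal : rotate j ζ =ᶠ[nhds z] fun z =>
        transport (baseSection j (quad z)) z (baseSection j (ζ * quad z)) := by
      filter_upwards [(isOpen_lt continuous_normSq_quad continuous_const).mem_nhds hw] with z hz
      exact rotate_of_lt j ζ hz
    have hsection : ContDiffAt ℝ n (fun z => baseSection j (quad z)) z :=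
      (contDiffAt_baseSection j hw).comp z (by fun_prop)
    have hrotated : ContDiffAt ℝ n (fun z => baseSection j (ζ * quad z)) z :=
      ContDiffAt.comp (g := baseSection j) z
        (contDiffAt_baseSection j (by rwa [normSq_circle_mul])) (by fun_prop)
    exact (contDiffAt_transport hsection contDiffAt_id hrotated
      (gramDet_baseSection_ne_zero j hw)).congr_of_eventuallyEq hlocal
  · have hlocal : rotate j ζ =ᶠ[nhds z] fun z => (ζ : ℂ) ^ (2 * j) • z := by
      have hw' : 3 / 4 < Complex.normSq (quad z) := by linarith
      filter_upwards [(isOpen_lt continuous_const continuous_normSq_quad).mem_nhds hw'] with z hz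
      exact rotate_of_three_fourths_le hζ hz.le
    exact ContDiffAt.congr_of_eventuallyEq (by fun_prop) hlocal

theorem coords_baseSection (j : ℕ) (ζ : Circle) {w : ℂ} (hw : Complex.normSq w < 1 / 4) :
    coords (baseSection j w) (baseSection j (ζ * w)) =
      (((1 + height w) - ζ * (1 - height w) : ℂ) / (2 * height w),
        (ζ - 1) * w / (2 * height w), 0) := by
  have hw' : Complex.normSq w < 1 := by linarith
  have hne : (height w : ℂ) ≠ 0 := Complex.ofReal_ne_zero.mpr (height_pos hw').ne'
  have hheight : w * conj w = 1 - (height w : ℂ) ^ 2 := by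
    rw [Complex.mul_conj]
    exact mod_cast (by linarith [height_sq hw'] : Complex.normSq w = 1 - height w ^ 2)
  have hgram : (gramDet (baseSection j w) : ℂ) = (height w : ℂ) ^ 2 := by
    rw [ofReal_gramDet, sqNorm_baseSection j hw', quad_baseSection, hheight]
    norm_num
  have hA : secA w * conj (secA w) = (1 - height w) / 2 := by
    rw [Complex.mul_conj, normSq_secA hw']
    norm_num
  have hB : (secB w : ℂ) ^ 2 = (1 + height w) / 2 := by
    exact mod_cast secB_sq w
  have hnear := baseSection_of_normSq_le j hw.le
  have hnear' := baseSection_of_normSq_le j ((normSq_circle_mul ζ w).trans_le hw.le)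
  rw [secB_mul, secA_mul] at hnear'
  have hbil : bil (baseSection j (ζ * w)) (baseSection j w) = (1 + ζ) * w / 2 := by
    rw [hnear, hnear', bil_apply]
    linear_combination (1 + (ζ : ℂ)) / 2 * two_mul_secB_mul_secA w
  have hbar : bil (baseSection j (ζ * w)) (bar (baseSection j w)) =
      ((1 + height w) + ζ * (1 - height w)) / 2 := by
    rw [hnear, hnear', bil_apply, bar_apply, Complex.conj_ofReal]
    linear_combination hB + ζ * hA
  have hnormal : bil (baseSection j (ζ * w)) (normal (baseSection j w)) = 0 := by
    rw [hnear, hnear', bil_apply, normal, cross_apply, bar_apply]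
    simp
  rw [coords_apply, hbil, hbar, hnormal, hgram, sqNorm_baseSection j hw', quad_baseSection,
    Complex.ofReal_one]
  ext
  · field_simp
    linear_combination (-(1 + (ζ : ℂ))) * hheight
  · field_simp
    ring
  · simp

theorem rotate_of_lt_one_fourth (j : ℕ) (ζ : Circle) {z : C3}
    (hw : Complex.normSq (quad z) < 1 / 4) :
    rotate j ζ z =
      (((1 + height (quad z)) - ζ * (1 - height (quad z)) : ℂ) / (2 * height (quad z))) • z +
        ((ζ - 1) * quad z / (2 * height (quad z))) • bar z := by
  rw [rotate_of_lt j ζ (by linarith), transport, LinearMap.comp_apply, coords_baseSection j ζ hw,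
    frame_apply, zero_smul, add_zero]

open Classical in
/-- The quotient of the displacement `rotate j ζ z - z` by `quad z`, extended smoothly over the
zeros of `quad`. -/
noncomputable def slope (j : ℕ) (ζ : Circle) (z : C3) : C3 :=
  if Complex.normSq (quad z) < 1 / 4 then
    ((ζ - 1) / (2 * height (quad z)) : ℂ) •
      (bar z - (conj (quad z) / (1 + height (quad z)) : ℂ) • z)
  else (quad z)⁻¹ • (rotate j ζ z - z)

theorem quad_smul_slope (j : ℕ) (ζ : Circle) (z : C3) :
    quad z • slope j ζ z = rotate j ζ z - z := by
  rw [slope]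
  split_ifs with hw
  · have hw' : Complex.normSq (quad z) < 1 := by linarith
    have hpos := height_pos hw'
    have hne : (height (quad z) : ℂ) ≠ 0 := Complex.ofReal_ne_zero.mpr hpos.ne'
    have hne' : (1 + height (quad z) : ℂ) ≠ 0 := by exact_mod_cast (by positivity)
    have hheight : quad z * conj (quad z) = 1 - (height (quad z) : ℂ) ^ 2 := by
      rw [Complex.mul_conj]
      exact mod_cast (by linarith [height_sq hw'])
    rw [rotate_of_lt_one_fourth j ζ hw]
    match_scalars
    · field_simp
    · field_simp
      linear_combination (-(ζ - 1 : ℂ)) * hheight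
  · have hne : quad z ≠ 0 := fun h => hw (by norm_num [h])
    rw [smul_inv_smul₀ hne]

theorem slope_of_quad_ne_zero (j : ℕ) (ζ : Circle) {z : C3} (hz : quad z ≠ 0) :
    slope j ζ z = (quad z)⁻¹ • (rotate j ζ z - z) := by
  rw [← quad_smul_slope, inv_smul_smul₀ hz]

theorem contDiff_slope {j : ℕ} {ζ : Circle} (hζ : ζ ^ (4 * j) = ζ) (n : ℕ∞) :
    ContDiff ℝ n (slope j ζ) := by
  refine contDiff_iff_contDiffAt.mpr fun z => ?_
  by_cases hw : Complex.normSq (quad z) < 1 / 4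
  · have hw' : Complex.normSq (quad z) < 1 := by linarith
    have hpos := height_pos hw'
    have hne : (2 * height (quad z) : ℂ) ≠ 0 := by exact_mod_cast (by positivity)
    have hne' : (1 + height (quad z) : ℂ) ≠ 0 := by exact_mod_cast (by positivity)
    have hheight : ContDiffAt ℝ n (fun z => height (quad z)) z :=
      (contDiffAt_height hw').comp z (by fun_prop)
    have hlocal : slope j ζ =ᶠ[nhds z] fun z => ((ζ - 1) / (2 * height (quad z)) : ℂ) •
        (bar z - (conj (quad z) / (1 + height (quad z)) : ℂ) • z) := by
      filter_upwards [(isOpen_lt continuous_normSq_quad continuous_const).mem_nhds hw] with z hz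
      exact if_pos hz
    exact ContDiffAt.congr_of_eventuallyEq (by fun_prop (disch := assumption)) hlocal
  · have hne : quad z ≠ 0 := fun h => hw (by norm_num [h])
    have hlocal : slope j ζ =ᶠ[nhds z] fun z => (quad z)⁻¹ • (rotate j ζ z - z) := by
      filter_upwards [continuous_quad.continuousAt.eventually_ne hne] with z hz
      exact slope_of_quad_ne_zero j ζ hz
    have hrotate : ContDiffAt ℝ n (rotate j ζ) z := (contDiff_rotate hζ n).contDiffAt
    exact ContDiffAt.congr_of_eventuallyEq
      ((ContDiffAt.inv (by fun_prop) hne).smul (hrotate.sub contDiffAt_id)) hlocal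

/-! ### Spinning -/

/-- The ambient space of the sphere of dimension `l + 5`, decomposed by `head` and `tail` as a real
hyperplane of `C3` and a space of dimension `l + 1`. -/
abbrev Ambient (l : ℕ) : Type := EuclideanSpace ℝ (Fin (l + 5 + 1))

/-- The point `(1, 0, 0)`, at which the unit sphere of `C3` is cut open before spinning. -/
def pole : C3 := (1, 0, 0)

theorem quad_pole : quad pole = 0 := by
  simp [quad_apply, pole]

theorem sqNorm_pole_add_smul (r : ℝ) (z : C3) :
    sqNorm (pole + (r : ℂ) • z) = 1 + 2 * r * z.1.re + r ^ 2 * sqNorm z := by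
  simp only [sqNorm, pole, Complex.normSq_apply, Prod.fst_add, Prod.snd_add, Prod.smul_fst,
    Prod.smul_snd, smul_eq_mul, Complex.add_re, Complex.add_im, Complex.re_ofReal_mul,
    Complex.im_ofReal_mul, Complex.one_re, Complex.one_im, Complex.zero_re, Complex.zero_im]
  ring

theorem sqNorm_nonneg (z : C3) : 0 ≤ sqNorm z :=
  add_nonneg (add_nonneg (Complex.normSq_nonneg _) (Complex.normSq_nonneg _))
    (Complex.normSq_nonneg _)

theorem sqNorm_eq_zero {z : C3} : sqNorm z = 0 ↔ z = 0 := by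
  have h₁ := Complex.normSq_nonneg z.1
  have h₂ := Complex.normSq_nonneg z.2.1
  have h₃ := Complex.normSq_nonneg z.2.2
  rw [sqNorm, add_eq_zero_iff_of_nonneg (add_nonneg h₁ h₂) h₃, add_eq_zero_iff_of_nonneg h₁ h₂]
  simp only [map_eq_zero, and_assoc, Prod.ext_iff, Prod.fst_zero, Prod.snd_zero]

variable {l : ℕ}

/-- The component in `C3` of a vector of `Ambient l`. -/
noncomputable def head (v : Ambient l) : C3 := (⟨0, v 0⟩, ⟨v 1, v 2⟩, ⟨v 3, v 4⟩)

/-- The last `l + 1` coordinates of a vector of `Ambient l`. -/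
def tail (v : Ambient l) (i : Fin (l + 1)) : ℝ := v i.succ.succ.succ.succ.succ

/-- The squared norm of `tail v`. -/
def sqRadius (v : Ambient l) : ℝ := ∑ i, tail v i ^ 2

/-- The vector with given `head` and `tail`, discarding the real part of the first coordinate of
`z`. -/
def assemble (z : C3) (y : Fin (l + 1) → ℝ) : Ambient l :=
  WithLp.toLp 2 (Fin.cons z.1.im (Fin.cons z.2.1.re (Fin.cons z.2.1.im
    (Fin.cons z.2.2.re (Fin.cons z.2.2.im y)))))

theorem head_assemble (z : C3) (y : Fin (l + 1) → ℝ) :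
    head (assemble z y) = z - (z.1.re : ℂ) • pole := by
  have hhead : head (assemble z y) = (⟨0, z.1.im⟩, z.2.1, z.2.2) := rfl
  have hre : (⟨0, z.1.im⟩ : ℂ) = z.1 - z.1.re := by
    apply Complex.ext <;> simp
  rw [hhead, hre]
  ext <;> simp [pole]

theorem tail_assemble (z : C3) (y : Fin (l + 1) → ℝ) : tail (assemble z y) = y := rfl

theorem assemble_head_tail (v : Ambient l) : assemble (head v) (tail v) = v := by
  ext i
  refine Fin.cases rfl (fun i => ?_) i
  refine Fin.cases rfl (fun i => ?_) i
  refine Fin.cases rfl (fun i => ?_) i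
  refine Fin.cases rfl (fun i => ?_) i
  exact Fin.cases rfl (fun i => rfl) i

theorem re_fst_head (v : Ambient l) : (head v).1.re = 0 := rfl

theorem sqRadius_nonneg (v : Ambient l) : 0 ≤ sqRadius v :=
  Finset.sum_nonneg fun i _ => sq_nonneg (tail v i)

theorem norm_sq_eq (v : Ambient l) : ‖v‖ ^ 2 = sqNorm (head v) + sqRadius v := by
  simp only [EuclideanSpace.norm_sq_eq, Fin.sum_univ_succ (n := l + 5),
    Fin.sum_univ_succ (n := l + 4), Fin.sum_univ_succ (n := l + 3),
    Fin.sum_univ_succ (n := l + 2), Fin.sum_univ_succ (n := l + 1), Real.norm_eq_abs, sq_abs,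
    sqNorm, head, sqRadius, tail, Complex.normSq_apply, Fin.succ_zero_eq_one]
  have h₂ : v (Fin.succ 1) = v 2 := rfl
  have h₃ : v (Fin.succ (Fin.succ 1)) = v 3 := rfl
  have h₄ : v (Fin.succ (Fin.succ (Fin.succ 1))) = v 4 := rfl
  rw [h₂, h₃, h₄]
  ring

theorem mem_sphere_iff {v : Ambient l} : v ∈ Sph (l + 5) ↔ sqNorm (head v) + sqRadius v = 1 := by
  rw [mem_sphere_zero_iff_norm, ← norm_sq_eq,
    pow_eq_one_iff_of_nonneg (norm_nonneg v) two_ne_zero]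

/-- The vector of length `2` from `pole` to `collapse v`, scaled by `1 / sqRadius v`. -/
noncomputable def direction (v : Ambient l) : C3 :=
  (2 * √(1 + sqRadius v) : ℂ) • head v - (2 * sqRadius v : ℂ) • pole

/-- The map from the `l`-fold spun sphere to the unit sphere of `C3`. It sends the points with
vanishing tail to `pole`, and forgets the direction of the tail elsewhere. -/
noncomputable def collapse (v : Ambient l) : C3 := pole + (sqRadius v : ℂ) • direction v

/-- The quotient of `quad (collapse v)` by `sqRadius v`. -/
noncomputable def defect (v : Ambient l) : ℂ :=
  2 * (direction v).2.1 +
    sqRadius v * (2 * (direction v).1 * (direction v).2.1 + (direction v).2.2 ^ 2)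

theorem quad_collapse (v : Ambient l) : quad (collapse v) = sqRadius v * defect v := by
  simp only [quad_apply, collapse, defect, pole, Prod.fst_add, Prod.snd_add, Prod.smul_fst,
    Prod.smul_snd, smul_eq_mul]
  ring

theorem collapse_of_sqRadius_eq_zero {v : Ambient l} (hv : sqRadius v = 0) :
    collapse v = pole := by
  simp [collapse, hv]

theorem re_fst_direction (v : Ambient l) : (direction v).1.re = -2 * sqRadius v := by
  simp [direction, pole, re_fst_head]

theorem sqNorm_direction (v : Ambient l) :
    sqNorm (direction v) = 4 * (1 + sqRadius v) * sqNorm (head v) + 4 * sqRadius v ^ 2 := by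
  have hsqrt : √(1 + sqRadius v) ^ 2 = 1 + sqRadius v :=
    Real.sq_sqrt (by linarith [sqRadius_nonneg v])
  simp only [sqNorm, direction, head, Prod.smul_mk, smul_eq_mul, pole, mul_one, mul_zero,
    Prod.mk_sub_mk, sub_zero, Complex.normSq_apply, Complex.sub_re, Complex.mul_re,
    Complex.re_ofNat, Complex.ofReal_re, Complex.im_ofNat, Complex.ofReal_im, Complex.mul_im,
    zero_mul, add_zero, sub_self, zero_sub, mul_neg, neg_mul, neg_neg, Complex.sub_im, zero_add]
  linear_combination
    4 * (v 0 * v 0 + (v 1 * v 1 + v 2 * v 2) + (v 3 * v 3 + v 4 * v 4)) * hsqrt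

theorem mem_sphere_iff_sqNorm_direction {v : Ambient l} :
    v ∈ Sph (l + 5) ↔ sqNorm (direction v) = 4 := by
  have hpos : 1 + sqRadius v ≠ 0 := by linarith [sqRadius_nonneg v]
  rw [mem_sphere_iff, sqNorm_direction, ← mul_right_inj' hpos]
  constructor <;> intro h
  · linear_combination 4 * h
  · linear_combination h / 4

theorem sqNorm_collapse {v : Ambient l} (hv : v ∈ Sph (l + 5)) : sqNorm (collapse v) = 1 := by
  rw [collapse, sqNorm_pole_add_smul, mem_sphere_iff_sqNorm_direction.mp hv, re_fst_direction]
  ring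

theorem ext_direction_tail {v w : Ambient l} (hdirection : direction v = direction w)
    (htail : tail v = tail w) : v = w := by
  have hradius : sqRadius v = sqRadius w := by rw [sqRadius, sqRadius, htail]
  have hpos : 0 < √(1 + sqRadius w) := Real.sqrt_pos.mpr (by linarith [sqRadius_nonneg w])
  have hne : (2 * √(1 + sqRadius w) : ℂ) ≠ 0 := by exact_mod_cast (by positivity)
  rw [direction, direction, hradius, sub_left_inj, smul_right_inj hne] at hdirection
  rw [← assemble_head_tail v, hdirection, htail, assemble_head_tail]

/-- The direction of the image of `v` under `spin`, before normalization. -/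
noncomputable def liftedDirection (j : ℕ) (ζ : Circle) (v : Ambient l) : C3 :=
  direction v + defect v • slope j ζ (collapse v)

theorem pole_add_smul_liftedDirection (j : ℕ) (ζ : Circle) (v : Ambient l) :
    pole + (sqRadius v : ℂ) • liftedDirection j ζ v = rotate j ζ (collapse v) := by
  rw [liftedDirection, smul_add, ← add_assoc, ← collapse, smul_smul, ← quad_collapse,
    quad_smul_slope, add_sub_cancel]

theorem liftedDirection_of_sqRadius_ne_zero (j : ℕ) (ζ : Circle) {v : Ambient l}
    (hv : sqRadius v ≠ 0) :
    liftedDirection j ζ v = (sqRadius v : ℂ)⁻¹ • (rotate j ζ (collapse v) - pole) := by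
  rw [← pole_add_smul_liftedDirection, add_sub_cancel_left,
    inv_smul_smul₀ (Complex.ofReal_ne_zero.mpr hv)]

theorem slope_pole (j : ℕ) (ζ : Circle) : slope j ζ pole = (0, ((ζ : ℂ) - 1) / 2, 0) := by
  rw [slope, quad_pole, if_pos (by norm_num)]
  simp [height, bar_apply, pole]

theorem liftedDirection_of_sqRadius_eq_zero (j : ℕ) (ζ : Circle) {v : Ambient l}
    (hv : sqRadius v = 0) :
    liftedDirection j ζ v = ((direction v).1, ζ * (direction v).2.1, (direction v).2.2) := by
  rw [liftedDirection, collapse_of_sqRadius_eq_zero hv, slope_pole, defect, hv]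
  ext
  · simp
  · simp only [Complex.ofReal_zero, zero_mul, add_zero, Prod.smul_mk, smul_eq_mul, mul_zero,
      Prod.snd_add, Prod.fst_add]
    ring
  · simp

theorem slope_one (j : ℕ) (z : C3) : slope j 1 z = 0 := by
  simp [slope, rotate_one]

theorem liftedDirection_one (j : ℕ) (v : Ambient l) : liftedDirection j 1 v = direction v := by
  rw [liftedDirection, slope_one, smul_zero, add_zero]

theorem rotate_of_quad_eq_zero (j : ℕ) (ζ : Circle) {z : C3} (hz : quad z = 0) :
    rotate j ζ z = z := by
  rw [← sub_eq_zero, ← quad_smul_slope, hz, zero_smul]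

/-- The factor by which `spin` stretches `sqRadius`. -/
noncomputable def stretch (j : ℕ) (ζ : Circle) (v : Ambient l) : ℝ :=
  √(sqNorm (liftedDirection j ζ v)) / 2

theorem sqNorm_liftedDirection (j : ℕ) (ζ : Circle) (v : Ambient l) :
    sqNorm (liftedDirection j ζ v) = 4 * stretch j ζ v ^ 2 := by
  rw [stretch, div_pow, Real.sq_sqrt (sqNorm_nonneg _)]
  ring

theorem stretch_of_sqNorm_eq {j : ℕ} {ζ : Circle} {v : Ambient l}
    (h : sqNorm (liftedDirection j ζ v) = 4) : stretch j ζ v = 1 := by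
  rw [stretch, h, show (4 : ℝ) = 2 ^ 2 by norm_num, Real.sqrt_sq zero_le_two, div_self two_ne_zero]

theorem stretch_of_sqRadius_eq_zero (j : ℕ) (ζ : Circle) {v : Ambient l} (hv : v ∈ Sph (l + 5))
    (hradius : sqRadius v = 0) : stretch j ζ v = 1 := by
  apply stretch_of_sqNorm_eq
  rw [liftedDirection_of_sqRadius_eq_zero j ζ hradius, sqNorm, normSq_circle_mul]
  exact mem_sphere_iff_sqNorm_direction.mp hv

section Rotation

variable {j : ℕ} {ζ : Circle} (hζ : ζ ^ (4 * j) = ζ) {v : Ambient l} (hv : v ∈ Sph (l + 5))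
include hζ hv

theorem liftedDirection_ne_zero : liftedDirection j ζ v ≠ 0 := by
  intro hzero
  have hdirection : direction v ≠ 0 := fun h => by
    simpa [h, sqNorm] using mem_sphere_iff_sqNorm_direction.mp hv
  have hrotate : rotate j ζ (collapse v) = pole := by
    rw [← pole_add_smul_liftedDirection, hzero, smul_zero, add_zero]
  have hcollapse : collapse v = pole := by
    rw [← rotate_one j (collapse v), ← inv_mul_cancel ζ, ← rotate_rotate hζ _ (sqNorm_collapse hv),
      hrotate, rotate_of_quad_eq_zero j _ quad_pole]
  have hradius : sqRadius v = 0 := by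
    simpa [collapse, hdirection] using hcollapse
  have hnorm := sqNorm_liftedDirection j ζ v
  rw [stretch_of_sqRadius_eq_zero j ζ hv hradius, hzero, sqNorm_eq_zero.mpr rfl] at hnorm
  norm_num at hnorm

theorem sqNorm_liftedDirection_pos : 0 < sqNorm (liftedDirection j ζ v) :=
  (sqNorm_nonneg _).lt_of_ne' (sqNorm_eq_zero.not.mpr (liftedDirection_ne_zero hζ hv))

theorem stretch_pos : 0 < stretch j ζ v :=
  half_pos (Real.sqrt_pos.mpr (sqNorm_liftedDirection_pos hζ hv))

end Rotation

theorem re_fst_liftedDirection (j : ℕ) (ζ : Circle) {v : Ambient l} (hv : v ∈ Sph (l + 5)) :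
    (liftedDirection j ζ v).1.re = -2 * sqRadius v * stretch j ζ v ^ 2 := by
  by_cases hradius : sqRadius v = 0
  · rw [liftedDirection_of_sqRadius_eq_zero j ζ hradius, re_fst_direction, hradius]
    ring
  · have hnorm := sqNorm_rotate j ζ (sqNorm_collapse hv)
    rw [← pole_add_smul_liftedDirection, sqNorm_pole_add_smul, sqNorm_liftedDirection] at hnorm
    apply mul_left_cancel₀ hradius
    linarith

/-- The lift to the spun sphere of `rotate j ζ`. -/
noncomputable def spin (j : ℕ) (ζ : Circle) (v : Ambient l) : Ambient l :=
  assemble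
    (((2 * stretch j ζ v * √(1 + stretch j ζ v * sqRadius v))⁻¹ : ℝ) • liftedDirection j ζ v)
    (√(stretch j ζ v) • tail v)

theorem tail_spin (j : ℕ) (ζ : Circle) (v : Ambient l) :
    tail (spin j ζ v) = √(stretch j ζ v) • tail v := rfl

theorem sqRadius_spin (j : ℕ) (ζ : Circle) (v : Ambient l) :
    sqRadius (spin j ζ v) = stretch j ζ v * sqRadius v := by
  have hstretch : 0 ≤ stretch j ζ v := div_nonneg (Real.sqrt_nonneg _) zero_le_two
  simp only [sqRadius, tail_spin, Pi.smul_apply, smul_eq_mul, mul_pow, Real.sq_sqrt hstretch,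
    Finset.mul_sum]

section Rotation

variable {j : ℕ} {ζ : Circle} (hζ : ζ ^ (4 * j) = ζ) {v : Ambient l} (hv : v ∈ Sph (l + 5))
include hζ hv

theorem direction_spin :
    direction (spin j ζ v) = (stretch j ζ v : ℂ)⁻¹ • liftedDirection j ζ v := by
  have hstretch := stretch_pos hζ hv
  have hradius := sqRadius_nonneg v
  have hsqrt : 0 < √(1 + stretch j ζ v * sqRadius v) := Real.sqrt_pos.mpr (by positivity)
  have hne : (stretch j ζ v : ℂ) ≠ 0 := Complex.ofReal_ne_zero.mpr hstretch.ne'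
  have hne' : (√(1 + stretch j ζ v * sqRadius v) : ℂ) ≠ 0 :=
    Complex.ofReal_ne_zero.mpr hsqrt.ne'
  rw [direction, sqRadius_spin, spin, head_assemble, ← Complex.coe_smul, Prod.smul_fst,
    smul_eq_mul, Complex.re_ofReal_mul, re_fst_liftedDirection j ζ hv]
  match_scalars
  · field_simp
  · field_simp
    ring

theorem spin_mem_sphere : spin j ζ v ∈ Sph (l + 5) := by
  have hstretch := stretch_pos hζ hv
  rw [mem_sphere_iff_sqNorm_direction, direction_spin hζ hv, sqNorm_smul, map_inv₀,
    Complex.normSq_ofReal, sqNorm_liftedDirection]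
  field_simp

theorem collapse_spin : collapse (spin j ζ v) = rotate j ζ (collapse v) := by
  have hne : (stretch j ζ v : ℂ) ≠ 0 := Complex.ofReal_ne_zero.mpr (stretch_pos hζ hv).ne'
  rw [collapse, direction_spin hζ hv, sqRadius_spin, Complex.ofReal_mul, mul_comm, mul_smul,
    smul_inv_smul₀ hne, pole_add_smul_liftedDirection]

theorem liftedDirection_spin (ξ : Circle) : liftedDirection j ξ (spin j ζ v) =
    (stretch j ζ v : ℂ)⁻¹ • liftedDirection j (ξ * ζ) v := by
  by_cases hradius : sqRadius v = 0
  · have hradius' : sqRadius (spin j ζ v) = 0 := by rw [sqRadius_spin, hradius, mul_zero]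
    rw [liftedDirection_of_sqRadius_eq_zero j ξ hradius', direction_spin hζ hv,
      liftedDirection_of_sqRadius_eq_zero j _ hradius,
      liftedDirection_of_sqRadius_eq_zero j _ hradius,
      stretch_of_sqRadius_eq_zero j ζ hv hradius]
    simp [mul_assoc]
  · have hradius' : sqRadius (spin j ζ v) ≠ 0 := by
      rw [sqRadius_spin]
      exact mul_ne_zero (stretch_pos hζ hv).ne' hradius
    rw [liftedDirection_of_sqRadius_ne_zero j ξ hradius', collapse_spin hζ hv,
      rotate_rotate hζ ξ (sqNorm_collapse hv), liftedDirection_of_sqRadius_ne_zero j _ hradius,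
      smul_smul, sqRadius_spin, Complex.ofReal_mul, mul_inv]

theorem stretch_spin (ξ : Circle) :
    stretch j ξ (spin j ζ v) = stretch j (ξ * ζ) v / stretch j ζ v := by
  have hnonneg := (stretch_pos hζ hv).le
  rw [stretch, liftedDirection_spin hζ hv, sqNorm_smul, map_inv₀, Complex.normSq_ofReal,
    Real.sqrt_mul (by positivity), Real.sqrt_inv, Real.sqrt_mul_self hnonneg,
    stretch.eq_1 j (ξ * ζ)]
  ring

theorem spin_spin {ξ : Circle} (hξ : ξ ^ (4 * j) = ξ) :
    spin j ξ (spin j ζ v) = spin j (ξ * ζ) v := by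
  have hpos := stretch_pos hζ hv
  have hne : (stretch j ζ v : ℂ) ≠ 0 := Complex.ofReal_ne_zero.mpr hpos.ne'
  have hξζ : (ξ * ζ) ^ (4 * j) = ξ * ζ := by rw [mul_pow, hξ, hζ]
  refine ext_direction_tail ?_ ?_
  · rw [direction_spin hξ (spin_mem_sphere hζ hv), liftedDirection_spin hζ hv,
      stretch_spin hζ hv, direction_spin hξζ hv, smul_smul, Complex.ofReal_div, inv_div,
      div_mul_eq_mul_div, mul_inv_cancel₀ hne, one_div]
  · rw [tail_spin, tail_spin, tail_spin, smul_smul, stretch_spin hζ hv,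
      ← Real.sqrt_mul' _ hpos.le, div_mul_cancel₀ _ hpos.ne']

end Rotation

section Smoothness

theorem contDiff_head (n : ℕ∞) : ContDiff ℝ n (head : Ambient l → C3) := by
  have hhead : (head : Ambient l → C3) = fun v =>
      (v 0 * Complex.I, v 1 + v 2 * Complex.I, v 3 + v 4 * Complex.I) := by
    ext v <;> simp [head, Complex.mk_eq_add_mul_I]
  rw [hhead]
  exact contDiff_iff_contDiffAt.mpr fun v => by fun_prop

theorem contDiff_sqRadius (n : ℕ∞) : ContDiff ℝ n (sqRadius : Ambient l → ℝ) := by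
  unfold sqRadius tail
  fun_prop

theorem contDiffAt_assemble {E : Type*} [NormedAddCommGroup E] [NormedSpace ℝ E] {n : WithTop ℕ∞}
    {f : E → C3} {g : E → Fin (l + 1) → ℝ} {x : E} (hf : ContDiffAt ℝ n f x)
    (hg : ContDiffAt ℝ n g x) : ContDiffAt ℝ n (fun y => assemble (f y) (g y)) x := by
  rw [contDiffAt_euclidean]
  refine Fin.cases (contDiffAt_im hf.fst) (Fin.cases (contDiffAt_re hf.snd.fst)
    (Fin.cases (contDiffAt_im hf.snd.fst) (Fin.cases (contDiffAt_re hf.snd.snd)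
      (Fin.cases (contDiffAt_im hf.snd.snd) fun i => contDiffAt_pi.mp hg i))))

theorem contDiff_direction (n : ℕ∞) : ContDiff ℝ n (direction : Ambient l → C3) := by
  refine contDiff_iff_contDiffAt.mpr fun v => ?_
  have hhead : ContDiffAt ℝ n head v := (contDiff_head n).contDiffAt
  have hradius : ContDiffAt ℝ n sqRadius v := (contDiff_sqRadius n).contDiffAt
  have hsqrt : ContDiffAt ℝ n (fun v => √(1 + sqRadius v)) v :=
    ContDiffAt.sqrt (by fun_prop) (by linarith [sqRadius_nonneg v])
  unfold direction
  fun_prop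

theorem contDiff_collapse (n : ℕ∞) : ContDiff ℝ n (collapse : Ambient l → C3) := by
  refine contDiff_iff_contDiffAt.mpr fun v => ?_
  have hdirection : ContDiffAt ℝ n direction v := (contDiff_direction n).contDiffAt
  have hradius : ContDiffAt ℝ n sqRadius v := (contDiff_sqRadius n).contDiffAt
  unfold collapse
  fun_prop

theorem contDiff_defect (n : ℕ∞) : ContDiff ℝ n (defect : Ambient l → ℂ) := by
  refine contDiff_iff_contDiffAt.mpr fun v => ?_
  have hdirection : ContDiffAt ℝ n direction v := (contDiff_direction n).contDiffAt
  have hradius : ContDiffAt ℝ n sqRadius v := (contDiff_sqRadius n).contDiffAt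
  exact (contDiffAt_const.mul hdirection.snd.fst).add ((contDiffAt_ofReal hradius).mul
    (((contDiffAt_const.mul hdirection.fst).mul hdirection.snd.fst).add (hdirection.snd.snd.pow 2)))

variable {j : ℕ} {ζ : Circle} (hζ : ζ ^ (4 * j) = ζ)
include hζ

theorem contDiff_liftedDirection (n : ℕ∞) :
    ContDiff ℝ n (liftedDirection j ζ : Ambient l → C3) :=
  (contDiff_direction n).add
    ((contDiff_defect n).smul ((contDiff_slope hζ n).comp (contDiff_collapse n)))

theorem contDiffAt_stretch (n : ℕ∞) {v : Ambient l} (hv : v ∈ Sph (l + 5)) :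
    ContDiffAt ℝ n (stretch j ζ) v := by
  have hlifted : ContDiffAt ℝ n (liftedDirection j ζ) v :=
    (contDiff_liftedDirection hζ n).contDiffAt
  exact ((contDiffAt_sqNorm hlifted).sqrt (sqNorm_liftedDirection_pos hζ hv).ne').div_const 2

theorem contDiffAt_spin (n : ℕ∞) {v : Ambient l} (hv : v ∈ Sph (l + 5)) :
    ContDiffAt ℝ n (spin j ζ) v := by
  have hlifted : ContDiffAt ℝ n (liftedDirection j ζ) v :=
    (contDiff_liftedDirection hζ n).contDiffAt
  have hradius : ContDiffAt ℝ n sqRadius v := (contDiff_sqRadius n).contDiffAt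
  have hstretch : ContDiffAt ℝ n (stretch j ζ) v := contDiffAt_stretch hζ n hv
  have hpos := stretch_pos hζ hv
  have hnonneg := sqRadius_nonneg v
  have hradicand : 0 < 1 + stretch j ζ v * sqRadius v := by positivity
  have hsqrt : ContDiffAt ℝ n (fun v => √(1 + stretch j ζ v * sqRadius v)) v :=
    ContDiffAt.sqrt (by fun_prop) hradicand.ne'
  have hscale : ContDiffAt ℝ n
      (fun v => (2 * stretch j ζ v * √(1 + stretch j ζ v * sqRadius v))⁻¹) v :=
    ContDiffAt.inv (by fun_prop) (by positivity)
  have htail : ContDiffAt ℝ n (tail : Ambient l → Fin (l + 1) → ℝ) v := by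
    unfold tail
    fun_prop
  exact contDiffAt_assemble (hscale.smul hlifted) ((hstretch.sqrt hpos.ne').smul htail)

end Smoothness

/-- The action on the sphere of a group of unit complex numbers, parametrized by `χ`. -/
noncomputable def spinAct {j : ℕ} {G : Type*} (χ : G → Circle) (hχ : ∀ g, χ g ^ (4 * j) = χ g)
    (g : G) (v : Sph (l + 5)) : Sph (l + 5) :=
  ⟨spin j (χ g) v, spin_mem_sphere (hχ g) v.2⟩

theorem coe_spinAct {j : ℕ} {G : Type*} (χ : G → Circle) (hχ : ∀ g, χ g ^ (4 * j) = χ g) (g : G)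
    (v : Sph (l + 5)) : (spinAct χ hχ g v : Ambient l) = spin j (χ g) v := rfl

theorem contMDiff_spinAct {j : ℕ} {G : Type*} (χ : G → Circle) (hχ : ∀ g, χ g ^ (4 * j) = χ g)
    (g : G) (n : ℕ∞) :
    ContMDiff (𝓡 (l + 5)) (𝓡 (l + 5)) n (spinAct (l := l) χ hχ g) := by
  have : Fact (Module.finrank ℝ (Ambient l) = l + 5 + 1) := ⟨finrank_euclideanSpace_fin⟩
  have hspin : ContMDiff (𝓡 (l + 5)) 𝓘(ℝ, Ambient l) n
      fun v : Metric.sphere (0 : Ambient l) 1 => spin j (χ g) (v : Ambient l) := fun v =>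
    (contDiffAt_spin (hχ g) n v.2).contMDiffAt.comp v contMDiff_coe_sphere.contMDiffAt
  exact hspin.codRestrict_sphere fun v => spin_mem_sphere (hχ g) v.2

/-! ### The fixed point set -/

theorem spin_of_liftedDirection_eq {j : ℕ} {ζ : Circle} (hζ : ζ ^ (4 * j) = ζ) {v : Ambient l}
    (hv : v ∈ Sph (l + 5)) (hlifted : liftedDirection j ζ v = direction v) : spin j ζ v = v := by
  have hstretch : stretch j ζ v = 1 := stretch_of_sqNorm_eq <| by
    rw [hlifted, mem_sphere_iff_sqNorm_direction.mp hv]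
  refine ext_direction_tail ?_ ?_
  · rw [direction_spin hζ hv, hstretch, hlifted, Complex.ofReal_one, inv_one, one_smul]
  · rw [tail_spin, hstretch, Real.sqrt_one, one_smul]

theorem spin_one (j : ℕ) {v : Ambient l} (hv : v ∈ Sph (l + 5)) : spin j 1 v = v :=
  spin_of_liftedDirection_eq (one_pow _) hv (liftedDirection_one j v)

theorem defect_eq_zero_of_spin_eq_self {j : ℕ} {ζ : Circle} (hζ : ζ ^ (4 * j) = ζ) (hne : ζ ≠ 1)
    {v : Ambient l} (hv : v ∈ Sph (l + 5)) (hfixed : spin j ζ v = v) : defect v = 0 := by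
  have hne' : (ζ : ℂ) ≠ 1 := fun h => hne (Circle.ext h)
  have hquad : quad (collapse v) = ζ * quad (collapse v) := by
    rw [← quad_rotate hζ (sqNorm_collapse hv), ← collapse_spin hζ hv, hfixed]
  by_contra hdefect
  have hradius : sqRadius v = 0 := by
    by_contra hradius
    refine hne' ((right_eq_mul₀ ?_).mp hquad)
    rw [quad_collapse]
    exact mul_ne_zero (Complex.ofReal_ne_zero.mpr hradius) hdefect
  have hdirection := congrArg (fun z : C3 => z.2.1) (direction_spin hζ hv)
  simp only [hfixed, stretch_of_sqRadius_eq_zero j ζ hv hradius, Complex.ofReal_one, inv_one,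
    one_smul, liftedDirection_of_sqRadius_eq_zero j ζ hradius] at hdirection
  refine hne' ((right_eq_mul₀ fun h => hdefect ?_).mp hdirection)
  rw [defect, h, hradius, Complex.ofReal_zero, mul_zero, zero_mul, add_zero]

theorem spin_of_defect_eq_zero {j : ℕ} {ζ : Circle} (hζ : ζ ^ (4 * j) = ζ) {v : Ambient l}
    (hv : v ∈ Sph (l + 5)) (hdefect : defect v = 0) : spin j ζ v = v :=
  spin_of_liftedDirection_eq hζ hv <| by rw [liftedDirection, hdefect, zero_smul, add_zero]

/-- The common fixed point set of the rotations `spin j ζ` with `ζ ≠ 1`. -/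
def fixedLocus (l : ℕ) : Set (Ambient l) := {v | v ∈ Sph (l + 5) ∧ defect v = 0}

/-- The vector of `Ambient l` with direction `z` and with tail proportional to `y`. -/
noncomputable def ofDirection (z : C3) (y : Fin (l + 1) → ℝ) : Ambient l :=
  assemble ((2 * √(1 - z.1.re / 2))⁻¹ • z) (√(-z.1.re / 2) • y)

section OfDirection

variable {z : C3} {y : Fin (l + 1) → ℝ} (hz : z.1.re ≤ 0) (hy : ∑ i, y i ^ 2 = 1)
include hz hy

theorem sqRadius_ofDirection : sqRadius (ofDirection z y) = -z.1.re / 2 := by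
  have hnonneg : 0 ≤ -z.1.re / 2 := by linarith
  simp only [sqRadius, ofDirection, tail_assemble, Pi.smul_apply, smul_eq_mul, mul_pow,
    Real.sq_sqrt hnonneg, ← Finset.mul_sum, hy, mul_one]

theorem direction_ofDirection : direction (ofDirection z y) = z := by
  have hpos : 0 < √(1 - z.1.re / 2) := Real.sqrt_pos.mpr (by linarith)
  have hne : (√(1 - z.1.re / 2) : ℂ) ≠ 0 := Complex.ofReal_ne_zero.mpr hpos.ne'
  rw [direction, sqRadius_ofDirection hz hy, ofDirection, head_assemble, ← Complex.coe_smul,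
    Prod.smul_fst, smul_eq_mul, Complex.re_ofReal_mul, neg_div, ← sub_eq_add_neg]
  generalize √(1 - z.1.re / 2) = c at hne
  match_scalars
  · field_simp
  · field_simp
    ring

theorem ofDirection_mem_fixedLocus_iff : ofDirection z y ∈ fixedLocus l ↔
    sqNorm z = 4 ∧ 2 * z.2.1 - z.1.re / 2 * (2 * z.1 * z.2.1 + z.2.2 ^ 2) = 0 := by
  rw [fixedLocus, mem_ofPred_eq, mem_sphere_iff_sqNorm_direction, defect,
    sqRadius_ofDirection hz hy, direction_ofDirection hz hy, neg_div, Complex.ofReal_neg,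
    neg_mul, ← sub_eq_add_neg]
  norm_cast

end OfDirection

theorem exists_ofDirection_direction_eq (v : Ambient l) :
    ∃ y : Fin (l + 1) → ℝ, ∑ i, y i ^ 2 = 1 ∧ ofDirection (direction v) y = v := by
  obtain ⟨y, hy, htail⟩ : ∃ y, ∑ i, y i ^ 2 = 1 ∧ √(sqRadius v) • y = tail v := by
    rcases (sqRadius_nonneg v).eq_or_lt with hradius | hradius
    · refine ⟨Pi.single 0 1, by simp [Pi.single_apply], ?_⟩
      have htail : ∀ i ∈ Finset.univ, tail v i ^ 2 = 0 :=
        (Finset.sum_eq_zero_iff_of_nonneg fun i _ => sq_nonneg _).mp hradius.symm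
      ext i
      simp [← hradius, pow_eq_zero_iff two_ne_zero |>.mp (htail i (Finset.mem_univ i))]
    · refine ⟨(√(sqRadius v))⁻¹ • tail v, ?_, smul_inv_smul₀ (Real.sqrt_pos.mpr hradius).ne' _⟩
      simp only [Pi.smul_apply, smul_eq_mul, mul_pow, ← Finset.mul_sum, inv_pow,
        Real.sq_sqrt hradius.le]
      exact inv_mul_cancel₀ hradius.ne'
  have hre : (direction v).1.re ≤ 0 := by linarith [re_fst_direction v, sqRadius_nonneg v]
  refine ⟨y, hy, ext_direction_tail (direction_ofDirection hre hy) ?_⟩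
  rw [← htail, ofDirection, tail_assemble, re_fst_direction, neg_mul, neg_neg,
    mul_div_cancel_left₀ _ two_ne_zero]

theorem continuous_assemble :
    Continuous fun a : C3 × (Fin (l + 1) → ℝ) => (assemble a.1 a.2 : Ambient l) :=
  (contDiff_iff_contDiffAt (n := 0)).mpr
    (fun _ => contDiffAt_assemble contDiffAt_fst contDiffAt_snd) |>.continuous

theorem continuous_ofDirection {X : Type*} [TopologicalSpace X] {f : X → C3} (hf : Continuous f)
    (hre : ∀ x, (f x).1.re ≤ 0) (y : Fin (l + 1) → ℝ) :
    Continuous fun x => (ofDirection (f x) y : Ambient l) := by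
  have hscale : Continuous fun x => (2 * √(1 - (f x).1.re / 2))⁻¹ :=
    Continuous.inv₀ (by fun_prop) fun x =>
      mul_ne_zero two_ne_zero (Real.sqrt_pos.mpr (by linarith [hre x])).ne'
  have htail : Continuous fun x => √(-(f x).1.re / 2) • y := by fun_prop
  exact continuous_assemble.comp ((hscale.smul hf).prodMk htail)

/-- The double cover of the set `{quad z = 0, sqNorm z = 1}` by the unit sphere of `ℂ × ℂ`. -/
noncomputable def veronese (a b : ℂ) : C3 := (a ^ 2, b ^ 2, sqrtNegTwo * a * b)

theorem sqrtNegTwo_ne_zero : sqrtNegTwo ≠ 0 := by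
  intro h
  simpa [h] using sqrtNegTwo_sq

theorem sqNorm_veronese (a b : ℂ) :
    sqNorm (veronese a b) = (Complex.normSq a + Complex.normSq b) ^ 2 := by
  simp only [sqNorm, veronese, map_pow, map_mul, normSq_sqrtNegTwo]
  ring

theorem quad_veronese (a b : ℂ) : quad (veronese a b) = 0 := by
  rw [quad_apply, veronese]
  linear_combination (a * b) ^ 2 * sqrtNegTwo_sq

theorem veronese_neg (a b : ℂ) : veronese (-a) (-b) = veronese a b := by
  simp [veronese]

theorem veronese_eq_veronese_iff {a b a' b' : ℂ} :
    veronese a b = veronese a' b' ↔ a = a' ∧ b = b' ∨ a = -a' ∧ b = -b' := by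
  refine ⟨fun h => ?_, ?_⟩
  · have hfst : a ^ 2 = a' ^ 2 := congrArg (fun z : C3 => z.1) h
    have hsnd : b ^ 2 = b' ^ 2 := congrArg (fun z : C3 => z.2.1) h
    have hthd : sqrtNegTwo * a * b = sqrtNegTwo * a' * b' := congrArg (fun z : C3 => z.2.2) h
    have hprod : a * b = a' * b' := by
      apply mul_left_cancel₀ sqrtNegTwo_ne_zero
      rw [← mul_assoc, hthd, mul_assoc]
    rcases sq_eq_sq_iff_eq_or_eq_neg.mp hsnd with rfl | rfl <;>
      rcases sq_eq_sq_iff_eq_or_eq_neg.mp hfst with rfl | rfl <;>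
      grind
  · rintro (⟨rfl, rfl⟩ | ⟨rfl, rfl⟩)
    · rfl
    · exact veronese_neg _ _

theorem exists_veronese_eq {z : C3} (hquad : quad z = 0) : ∃ a b, veronese a b = z := by
  obtain ⟨a, ha⟩ := IsAlgClosed.exists_pow_nat_eq z.1 two_pos
  obtain ⟨b, hb⟩ := IsAlgClosed.exists_pow_nat_eq z.2.1 two_pos
  have hsq : (sqrtNegTwo * a * b) ^ 2 = z.2.2 ^ 2 := by
    rw [quad_apply] at hquad
    linear_combination (a * b) ^ 2 * sqrtNegTwo_sq - 2 * b ^ 2 * ha - 2 * z.1 * hb - hquad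
  rcases sq_eq_sq_iff_eq_or_eq_neg.mp hsq with hprod | hprod
  · exact ⟨a, b, Prod.ext ha (Prod.ext hb hprod)⟩
  · exact ⟨a, -b, Prod.ext ha (Prod.ext (by simpa [veronese] using hb) (by simp [veronese, hprod]))⟩

theorem exists_veronese_eq_of_sqNorm_eq_one {z : C3} (hquad : quad z = 0) (hnorm : sqNorm z = 1) :
    ∃ a b, Complex.normSq a + Complex.normSq b = 1 ∧ 0 ≤ a.re ∧ veronese a b = z := by
  obtain ⟨a, b, rfl⟩ := exists_veronese_eq hquad
  rw [sqNorm_veronese, pow_eq_one_iff_of_nonneg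
    (add_nonneg (Complex.normSq_nonneg a) (Complex.normSq_nonneg b)) two_ne_zero] at hnorm
  rcases le_total 0 a.re with hre | hre
  · exact ⟨a, b, hnorm, hre, rfl⟩
  · exact ⟨-a, -b, by simpa using hnorm, by simpa using hre, veronese_neg a b⟩

/-- The first coordinate at time `t` of the path in the unit sphere of `ℂ × ℂ` which multiplies the
imaginary part of `a` and the second coordinate by `t`, and so ends at `(1, 0)` for `t = 0`. -/
noncomputable def pull (a : ℂ) (t : ℝ) : ℂ :=
  (√(1 - t ^ 2 * (1 - a.re ^ 2)) : ℝ) + (t * a.im : ℝ) * Complex.I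

/-- The quotient by `t` of the vector from `pole` to `veronese (pull a t) (t * b)`. -/
noncomputable def chord (a b : ℂ) (t : ℝ) : C3 :=
  ((-(t * (Complex.normSq b + 2 * a.im ^ 2)) : ℝ) + (2 * (pull a t).re * a.im : ℝ) * Complex.I,
    t * b ^ 2, sqrtNegTwo * pull a t * b)

/-- The factor which rescales `chord a b t` to length `2`. -/
noncomputable def chordScale (a b : ℂ) : ℝ := √(2 / (Complex.normSq b + 2 * a.im ^ 2))

/-- The vector `chord a b t`, rescaled to length `2`. -/
noncomputable def chordDirection (a b : ℂ) (t : ℝ) : C3 := (chordScale a b : ℂ) • chord a b t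

theorem pull_one {a : ℂ} (ha : 0 ≤ a.re) : pull a 1 = a := by
  rw [pull, one_pow, one_mul, one_mul, sub_sub_cancel, Real.sqrt_sq ha, Complex.re_add_im]

theorem re_pull_sq {a b : ℂ} (hab : Complex.normSq a + Complex.normSq b = 1) {t : ℝ} (ht : t ∈ I) :
    (pull a t).re ^ 2 = 1 - t ^ 2 * (Complex.normSq b + a.im ^ 2) := by
  have hsum : 1 - a.re ^ 2 = Complex.normSq b + a.im ^ 2 := by
    rw [← hab, Complex.normSq_apply a]
    ring
  have hle : t ^ 2 * (1 - a.re ^ 2) ≤ 1 :=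
    mul_le_one₀ (pow_le_one₀ ht.1 ht.2) (by rw [hsum]; positivity [Complex.normSq_nonneg b])
      (by linarith [sq_nonneg a.re])
  simp only [pull, Complex.add_re, Complex.ofReal_re, Complex.re_ofReal_mul, Complex.I_re, mul_zero,
    add_zero]
  rw [Real.sq_sqrt (by linarith), hsum]

theorem im_pull (a : ℂ) (t : ℝ) : (pull a t).im = t * a.im := by
  simp [pull]

theorem pull_sq {a b : ℂ} (hab : Complex.normSq a + Complex.normSq b = 1) {t : ℝ} (ht : t ∈ I) :
    pull a t ^ 2 = 1 + t * (chord a b t).1 := by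
  have hre := re_pull_sq hab ht
  apply Complex.ext
  · simp only [pow_two, chord, Complex.mul_re, Complex.mul_im, Complex.add_re, Complex.add_im,
      Complex.ofReal_re, Complex.ofReal_im, Complex.one_re, Complex.I_re,
      im_pull]
    linear_combination hre
  · simp only [pow_two, chord, Complex.mul_re, Complex.mul_im, Complex.add_re, Complex.add_im,
      Complex.ofReal_re, Complex.ofReal_im, Complex.one_im, Complex.I_im,
      im_pull]
    ring

theorem pole_add_smul_chord {a b : ℂ} (hab : Complex.normSq a + Complex.normSq b = 1) {t : ℝ}
    (ht : t ∈ I) : pole + (t : ℂ) • chord a b t = veronese (pull a t) (t * b) := by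
  refine Prod.ext (pull_sq hab ht).symm (Prod.ext ?_ ?_)
  · simp only [pole, chord, veronese, Prod.smul_mk, Prod.mk_add_mk, smul_eq_mul]
    ring
  · simp only [pole, chord, veronese, Prod.smul_mk, Prod.mk_add_mk, smul_eq_mul]
    ring

theorem sqNorm_chord {a b : ℂ} (hab : Complex.normSq a + Complex.normSq b = 1) {t : ℝ}
    (ht : t ∈ I) : sqNorm (chord a b t) = 2 * (Complex.normSq b + 2 * a.im ^ 2) := by
  have hre := re_pull_sq hab ht
  have hpull : Complex.normSq (pull a t) = (pull a t).re ^ 2 + t ^ 2 * a.im ^ 2 := by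
    rw [Complex.normSq_apply, im_pull]
    ring
  simp only [sqNorm, chord, Complex.normSq_add_mul_I, map_mul, map_pow, Complex.normSq_ofReal,
    normSq_sqrtNegTwo, hpull]
  linear_combination (4 * a.im ^ 2 + 2 * Complex.normSq b) * hre

theorem re_fst_chordDirection (a b : ℂ) (t : ℝ) : (chordDirection a b t).1.re =
    -(chordScale a b * (t * (Complex.normSq b + 2 * a.im ^ 2))) := by
  rw [chordDirection, chord, Prod.smul_fst, smul_eq_mul, Complex.re_ofReal_mul, Complex.add_re,
    Complex.ofReal_re, Complex.re_ofReal_mul, Complex.I_re, mul_zero, add_zero, mul_neg]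

theorem re_fst_chordDirection_nonpos (a b : ℂ) {t : ℝ} (ht : t ∈ I) :
    (chordDirection a b t).1.re ≤ 0 := by
  have hscale : 0 ≤ chordScale a b := Real.sqrt_nonneg _
  have hnormSq := Complex.normSq_nonneg b
  have ht0 : 0 ≤ t := ht.1
  rw [re_fst_chordDirection, neg_nonpos]
  positivity

theorem continuous_chordDirection {X : Type*} [TopologicalSpace X] {a b : X → ℂ} {t : X → ℝ}
    (ha : Continuous a) (hb : Continuous b) (ht : Continuous t)
    (hpos : ∀ x, 0 < Complex.normSq (b x) + 2 * (a x).im ^ 2) :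
    Continuous fun x => chordDirection (a x) (b x) (t x) := by
  have hscale : Continuous fun x => chordScale (a x) (b x) :=
    (continuous_const.div (by fun_prop) fun x => (hpos x).ne').sqrt
  unfold chordDirection chord pull
  fun_prop

theorem chord_isotropic {a b : ℂ} (hab : Complex.normSq a + Complex.normSq b = 1) {t : ℝ}
    (ht : t ∈ I) : 2 * (chord a b t).2.1 +
      t * (2 * (chord a b t).1 * (chord a b t).2.1 + (chord a b t).2.2 ^ 2) = 0 := by
  have hsnd : (chord a b t).2.1 = t * b ^ 2 := rfl
  have hthd : (chord a b t).2.2 = sqrtNegTwo * pull a t * b := rfl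
  rw [hsnd, hthd]
  linear_combination t * b ^ 2 * pull a t ^ 2 * sqrtNegTwo_sq - 2 * t * b ^ 2 * pull_sq hab ht

section Chord

variable {a b : ℂ} (hpos : 0 < Complex.normSq b + 2 * a.im ^ 2)
include hpos

theorem chordScale_sq_mul :
    chordScale a b ^ 2 * (Complex.normSq b + 2 * a.im ^ 2) = 2 := by
  rw [chordScale, Real.sq_sqrt (by positivity), div_mul_cancel₀ _ hpos.ne']

theorem smul_chordDirection (t : ℝ) :
    ((-(chordDirection a b t).1.re / 2 : ℝ) : ℂ) • chordDirection a b t =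
      (t : ℂ) • chord a b t := by
  have hscale := chordScale_sq_mul hpos
  rw [re_fst_chordDirection, chordDirection, smul_smul, ← Complex.ofReal_mul]
  congr 2
  linear_combination t / 2 * hscale

variable (hab : Complex.normSq a + Complex.normSq b = 1) {t : ℝ} (ht : t ∈ I)
  {y : Fin (l + 1) → ℝ} (hy : ∑ i, y i ^ 2 = 1)
include hab ht hy

theorem collapse_ofDirection_chordDirection :
    collapse (ofDirection (chordDirection a b t) y) = veronese (pull a t) (t * b) := by
  have hre := re_fst_chordDirection_nonpos a b ht
  rw [collapse, sqRadius_ofDirection hre hy, direction_ofDirection hre hy,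
    smul_chordDirection hpos, pole_add_smul_chord hab ht]

theorem ofDirection_chordDirection_mem_fixedLocus :
    ofDirection (chordDirection a b t) y ∈ fixedLocus l := by
  have hscale := chordScale_sq_mul hpos
  rw [ofDirection_mem_fixedLocus_iff (re_fst_chordDirection_nonpos a b ht) hy]
  constructor
  · rw [chordDirection, sqNorm_smul, sqNorm_chord hab ht, Complex.normSq_ofReal]
    linear_combination 2 * hscale
  · have hsmul := smul_chordDirection hpos t
    have hfst := congrArg (fun z : C3 => z.1) hsmul
    have hthd := congrArg (fun z : C3 => z.2.2) hsmul
    have hsnd : (chordDirection a b t).2.1 = chordScale a b * (chord a b t).2.1 := rfl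
    have hthd' : (chordDirection a b t).2.2 = chordScale a b * (chord a b t).2.2 := rfl
    simp only [Prod.smul_fst, Prod.smul_snd, smul_eq_mul] at hfst hthd
    push_cast at hfst hthd
    rw [hthd'] at hthd
    rw [hsnd, hthd']
    linear_combination 2 * chordScale a b * (chord a b t).2.1 * hfst +
      chordScale a b * (chord a b t).2.2 * hthd +
      chordScale a b * chord_isotropic hab ht

end Chord

/-- The embedding of `ℝ³` as the real hyperplane of `ℂ × ℂ` where the first coordinate is
imaginary. -/
noncomputable def equator (r : EuclideanSpace ℝ (Fin 3)) : ℂ × ℂ :=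
  (r 0 * Complex.I, r 1 + r 2 * Complex.I)

theorem continuous_equator : Continuous equator := by
  unfold equator
  fun_prop

theorem equator_neg (r : EuclideanSpace ℝ (Fin 3)) : equator (-r) = -equator r := by
  simp only [equator, PiLp.neg_apply, Complex.ofReal_neg, neg_mul, Prod.neg_mk, neg_add]

theorem re_fst_equator (r : EuclideanSpace ℝ (Fin 3)) : (equator r).1.re = 0 :=
  Complex.re_ofReal_mul _ _ |>.trans (mul_zero _)

theorem mem_sphere_iff_normSq_equator {r : EuclideanSpace ℝ (Fin 3)} :
    r ∈ Sph 2 ↔ Complex.normSq (equator r).1 + Complex.normSq (equator r).2 = 1 := by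
  rw [mem_sphere_zero_iff_norm, ← pow_eq_one_iff_of_nonneg (norm_nonneg r) two_ne_zero,
    EuclideanSpace.norm_sq_eq, Fin.sum_univ_three, equator, Complex.normSq_add_mul_I,
    Complex.normSq_mul, Complex.normSq_ofReal, Complex.normSq_I]
  simp only [Real.norm_eq_abs, sq_abs, mul_one, ← pow_two, add_assoc]

theorem mem_fixedLocus_iff_of_sqRadius_eq_zero {v : Ambient l} (hv : sqRadius v = 0) :
    v ∈ fixedLocus l ↔ sqNorm (head v) = 1 ∧ (head v).2.1 = 0 := by
  rw [fixedLocus, mem_ofPred_eq, mem_sphere_iff, hv, add_zero, defect, direction, hv]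
  simp

theorem image_equator_sphere :
    (fun r => assemble ((equator r).1, 0, (equator r).2) 0) '' Sph 2 =
      fixedLocus l ∩ {v | sqRadius v = 0} := by
  ext v
  constructor
  · rintro ⟨r, hr, rfl⟩
    have hradius : sqRadius (assemble ((equator r).1, 0, (equator r).2) 0 : Ambient l) = 0 := by
      simp [sqRadius, tail_assemble]
    refine ⟨(mem_fixedLocus_iff_of_sqRadius_eq_zero hradius).mpr ?_, hradius⟩
    rw [head_assemble, re_fst_equator]
    simpa [sqNorm] using mem_sphere_iff_normSq_equator.mp hr
  · rintro ⟨hv, hradius⟩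
    obtain ⟨hnorm, hsnd⟩ := (mem_fixedLocus_iff_of_sqRadius_eq_zero hradius).mp hv
    have htail : tail v = 0 := by
      have hsum := (Finset.sum_eq_zero_iff_of_nonneg fun i _ => sq_nonneg (tail v i)).mp hradius
      exact funext fun i => pow_eq_zero_iff two_ne_zero |>.mp (hsum i (Finset.mem_univ i))
    have hequator : equator !₂[v 0, v 3, v 4] = ((head v).1, (head v).2.2) := by
      simp [equator, head, Prod.ext_iff, Complex.ext_iff]
    refine ⟨!₂[v 0, v 3, v 4], ?_, ?_⟩
    · rw [mem_sphere_iff_normSq_equator, hequator, ← hnorm, sqNorm, hsnd, map_zero, add_zero]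
    · simp only [hequator]
      rw [← hsnd, ← htail, assemble_head_tail]

theorem isPathConnected_fixedLocus_inter_sqRadius_eq_zero :
    IsPathConnected (fixedLocus l ∩ {v | sqRadius v = 0}) := by
  rw [← image_equator_sphere]
  refine (isPathConnected_sphere (by rw [← Module.finrank_eq_rank]; simp) 0 zero_le_one).image ?_
  exact continuous_assemble.comp (f := fun r => (((equator r).1, 0, (equator r).2), 0)) <| by
    have := continuous_equator
    fun_prop

theorem exists_chordDirection_eq {v : Ambient l} (hv : v ∈ fixedLocus l)
    (hradius : sqRadius v ≠ 0) :
    ∃ a b, 0 < Complex.normSq b + 2 * a.im ^ 2 ∧ Complex.normSq a + Complex.normSq b = 1 ∧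
      chordDirection a b 1 = direction v := by
  obtain ⟨a, b, hab, hre, hveronese⟩ := exists_veronese_eq_of_sqNorm_eq_one
    (by rw [quad_collapse, hv.2, mul_zero]) (sqNorm_collapse hv.1)
  have hchord : chord a b 1 = (sqRadius v : ℂ) • direction v := by
    have h := pole_add_smul_chord hab (right_mem_Icc.mpr zero_le_one)
    rwa [pull_one hre, Complex.ofReal_one, one_mul, one_smul, hveronese, collapse,
      add_right_inj] at h
  have hwidth : Complex.normSq b + 2 * a.im ^ 2 = 2 * sqRadius v ^ 2 := by
    have h := sqNorm_chord hab (right_mem_Icc.mpr zero_le_one)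
    rw [hchord, sqNorm_smul, mem_sphere_iff_sqNorm_direction.mp hv.1, Complex.normSq_ofReal] at h
    linarith
  have hpos : 0 < sqRadius v := (sqRadius_nonneg v).lt_of_ne' hradius
  refine ⟨a, b, by rw [hwidth]; positivity, hab, ?_⟩
  rw [chordDirection, chordScale, hwidth, hchord, div_mul_cancel_left₀ two_ne_zero, Real.sqrt_inv,
    Real.sqrt_sq hpos.le, Complex.ofReal_inv, inv_smul_smul₀ (Complex.ofReal_ne_zero.mpr hradius)]

theorem exists_joinedIn_fixedLocus {v : Ambient l} (hv : v ∈ fixedLocus l) :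
    ∃ w ∈ fixedLocus l ∩ {w | sqRadius w = 0}, JoinedIn (fixedLocus l) w v := by
  by_cases hradius : sqRadius v = 0
  · exact ⟨v, ⟨hv, hradius⟩, .refl hv⟩
  obtain ⟨a, b, hpos, hab, hdirection⟩ := exists_chordDirection_eq hv hradius
  obtain ⟨y, hy, hv_eq⟩ := exists_ofDirection_direction_eq v
  let γ (t : I) : Ambient l := ofDirection (chordDirection a b t) y
  have hγ : Continuous γ := continuous_ofDirection
    (continuous_chordDirection continuous_const continuous_const continuous_subtype_val
      fun _ => hpos) (fun t => re_fst_chordDirection_nonpos a b t.2) y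
  have hγ_mem (t : I) : γ t ∈ fixedLocus l :=
    ofDirection_chordDirection_mem_fixedLocus hpos hab t.2 hy
  have hstart : sqRadius (γ 0) = 0 := by
    rw [sqRadius_ofDirection (re_fst_chordDirection_nonpos a b (0 : I).2) hy,
      re_fst_chordDirection, Icc.coe_zero, zero_mul, mul_zero, neg_neg, zero_div]
  have hend : γ 1 = v := by
    rw [← hv_eq, ← hdirection]
    rfl
  exact ⟨γ 0, ⟨hγ_mem 0, hstart⟩, ⟨⟨γ, hγ⟩, rfl, hend⟩, hγ_mem⟩

theorem isPathConnected_fixedLocus : IsPathConnected (fixedLocus l) := by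
  have hbase := isPathConnected_fixedLocus_inter_sqRadius_eq_zero (l := l)
  obtain ⟨w₀, hw₀⟩ := hbase.nonempty
  refine ⟨w₀, hw₀.1, fun {v} hv => ?_⟩
  obtain ⟨w, hw, hwv⟩ := exists_joinedIn_fixedLocus hv
  exact ((hbase.joinedIn _ hw₀ _ hw).mono inter_subset_left).trans hwv

/-! ### The lower bound -/

/-- The unit sphere of `ℂ × ℂ`, with the antipodal action of `ℤˣ`. -/
def coverSphere : SubMulAction ℤˣ (ℂ × ℂ) where
  carrier := {e | Complex.normSq e.1 + Complex.normSq e.2 = 1}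
  smul_mem' u e he := by
    rcases Int.units_eq_one_or u with rfl | rfl
    · rwa [one_smul]
    · simpa using he

theorem coe_neg_one_smul (e : coverSphere) :
    (((-1 : ℤˣ) • e : coverSphere) : ℂ × ℂ) = -(e : ℂ × ℂ) := by
  simp

theorem isCompact_coverSphere : IsCompact (coverSphere : Set (ℂ × ℂ)) := by
  refine Metric.isCompact_of_isClosed_isBounded
    (isClosed_eq (by fun_prop) continuous_const) (Metric.isBounded_closedBall (x := 0) (r := 1)
      |>.subset fun e (he : Complex.normSq e.1 + Complex.normSq e.2 = 1) => ?_)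
  rw [Complex.normSq_eq_norm_sq, Complex.normSq_eq_norm_sq] at he
  rw [mem_closedBall_zero_iff, Prod.norm_def, max_le_iff]
  constructor <;> nlinarith [norm_nonneg e.1, norm_nonneg e.2]

instance : CompactSpace coverSphere := isCompact_iff_compactSpace.mp isCompact_coverSphere

instance : ContinuousConstSMul ℤˣ coverSphere where
  continuous_const_smul u := (continuous_subtype_val.const_smul u).subtype_mk fun e => (u • e).2

instance : IsCancelSMul ℤˣ coverSphere := by
  refine isCancelSMul_iff_eq_one_of_smul_eq.mpr fun u e he => ?_
  rcases Int.units_eq_one_or u with rfl | rfl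
  · rfl
  · have hzero : (e : ℂ × ℂ) = 0 :=
      neg_eq_self.mp ((coe_neg_one_smul e).symm.trans (congrArg Subtype.val he))
    have hnorm : Complex.normSq e.1.1 + Complex.normSq e.1.2 = 1 := e.2
    simp [hzero] at hnorm

/-- The double cover `veronese`, as a map between the unit sphere of `ℂ × ℂ` and its image. -/
noncomputable def veroneseCover (e : coverSphere) : {z : C3 // quad z = 0 ∧ sqNorm z = 1} :=
  ⟨veronese e.1.1 e.1.2, quad_veronese _ _, by rw [sqNorm_veronese, e.2, one_pow]⟩

theorem continuous_veroneseCover : Continuous veroneseCover := by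
  unfold veroneseCover veronese
  fun_prop

theorem surjective_veroneseCover : Function.Surjective veroneseCover := by
  rintro ⟨z, hquad, hnorm⟩
  obtain ⟨a, b, hab, -, hveronese⟩ := exists_veronese_eq_of_sqNorm_eq_one hquad hnorm
  exact ⟨⟨(a, b), hab⟩, Subtype.ext hveronese⟩

theorem veroneseCover_eq_iff {e e' : coverSphere} :
    veroneseCover e = veroneseCover e' ↔ e ∈ MulAction.orbit ℤˣ e' := by
  rw [Subtype.ext_iff, veroneseCover, veroneseCover, veronese_eq_veronese_iff]
  constructor
  · rintro (⟨h₁, h₂⟩ | ⟨h₁, h₂⟩)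
    · exact ⟨1, (one_smul _ _).trans (Subtype.ext (Prod.ext h₁ h₂)).symm⟩
    · exact ⟨-1, Subtype.ext ((coe_neg_one_smul e').trans (Prod.ext h₁ h₂).symm)⟩
  · rintro ⟨u, rfl⟩
    rcases Int.units_eq_one_or u with rfl | rfl
    · simp
    · simp

theorem isQuotientCoveringMap_veroneseCover : IsQuotientCoveringMap veroneseCover ℤˣ :=
  (continuous_veroneseCover.isClosedMap.isQuotientMap continuous_veroneseCover
    surjective_veroneseCover).isQuotientCoveringMap_of_properlyDiscontinuousSMul
    veroneseCover_eq_iff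

theorem chordDirection_neg {a : ℂ} (ha : a.re = 0) (b : ℂ) :
    chordDirection (-a) (-b) 1 = chordDirection a b 1 := by
  have hpull : pull (-a) 1 = -pull a 1 := by simp [pull, ha]
  have hpull_re : (pull a 1).re = 0 := by
    rw [pull_one ha.ge, ha]
  simp [chordDirection, chordScale, chord, hpull, hpull_re]

theorem normSq_add_two_mul_im_sq_equator_pos {r : EuclideanSpace ℝ (Fin 3)} (hr : r ∈ Sph 2) :
    0 < Complex.normSq (equator r).2 + 2 * (equator r).1.im ^ 2 := by
  have hnorm := mem_sphere_iff_normSq_equator.mp hr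
  rw [Complex.normSq_apply (equator r).1, re_fst_equator] at hnorm
  nlinarith [Complex.normSq_nonneg (equator r).2]

/-- The even map from the unit sphere of `ℝ³` to `fixedLocus l`. It induces a map from the
projective plane which lifts, along `collapse`, the restriction of `veronese` to `equator`. -/
noncomputable def planePoint (l : ℕ) (r : EuclideanSpace ℝ (Fin 3)) : Ambient l :=
  ofDirection (chordDirection (equator r).1 (equator r).2 1) (Pi.single 0 1)

theorem planePoint_neg (r : EuclideanSpace ℝ (Fin 3)) : planePoint l (-r) = planePoint l r := by
  rw [planePoint, equator_neg, Prod.fst_neg, Prod.snd_neg, chordDirection_neg (re_fst_equator r),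
    planePoint]

theorem sum_single_zero_one_sq : ∑ i, (Pi.single 0 1 : Fin (l + 1) → ℝ) i ^ 2 = 1 := by
  simp [Pi.single_apply]

theorem planePoint_mem_fixedLocus {r : EuclideanSpace ℝ (Fin 3)} (hr : r ∈ Sph 2) :
    planePoint l r ∈ fixedLocus l :=
  ofDirection_chordDirection_mem_fixedLocus (normSq_add_two_mul_im_sq_equator_pos hr)
    (mem_sphere_iff_normSq_equator.mp hr) (right_mem_Icc.mpr zero_le_one) sum_single_zero_one_sq

theorem collapse_planePoint {r : EuclideanSpace ℝ (Fin 3)} (hr : r ∈ Sph 2) :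
    collapse (planePoint l r) = veronese (equator r).1 (equator r).2 := by
  rw [planePoint, collapse_ofDirection_chordDirection (normSq_add_two_mul_im_sq_equator_pos hr)
    (mem_sphere_iff_normSq_equator.mp hr) (right_mem_Icc.mpr zero_le_one) sum_single_zero_one_sq,
    pull_one (re_fst_equator r).ge, Complex.ofReal_one, one_mul]

theorem continuous_planePoint : Continuous fun r : Sph 2 => planePoint l r :=
  have hequator : Continuous fun r : Sph 2 => equator r :=
    continuous_equator.comp continuous_subtype_val
  continuous_ofDirection (continuous_chordDirection hequator.fst hequator.snd continuous_const
    fun r => normSq_add_two_mul_im_sq_equator_pos r.2)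
    (fun _ => re_fst_chordDirection_nonpos _ _ (right_mem_Icc.mpr zero_le_one)) _

theorem four_le_TC_preimage_fixedLocus :
    4 ≤ TC ((↑) ⁻¹' fixedLocus l : Set (Sph (l + 5))) := by
  let Y : Set (Sph (l + 5)) := (↑) ⁻¹' fixedLocus l
  let q (v : Y) : {z : C3 // quad z = 0 ∧ sqNorm z = 1} :=
    ⟨collapse (v : Ambient l), by rw [quad_collapse, v.2.2, mul_zero], sqNorm_collapse v.1.2⟩
  let φ (r : Sph 2) : Y :=
    ⟨⟨planePoint l r, (planePoint_mem_fixedLocus r.2).1⟩, planePoint_mem_fixedLocus r.2⟩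
  let κ (r : Sph 2) : coverSphere := ⟨equator r, mem_sphere_iff_normSq_equator.mp r.2⟩
  have hq : Continuous q := ((contDiff_collapse 0).continuous.comp
    (continuous_subtype_val.comp continuous_subtype_val)).subtype_mk _
  have hφ : Continuous φ := (continuous_planePoint.subtype_mk _).subtype_mk _
  have hκ : Continuous κ := (continuous_equator.comp continuous_subtype_val).subtype_mk _
  exact four_le_TC_of_isQuotientCoveringMap isQuotientCoveringMap_veroneseCover hq hφ hκ
    (fun r => Subtype.ext (Subtype.ext (planePoint_neg (r : EuclideanSpace ℝ (Fin 3)))))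
    (fun r => Subtype.ext ((equator_neg _).trans (coe_neg_one_smul (κ r)).symm))
    (fun r => Subtype.ext (collapse_planePoint r.2))

theorem isPathConnected_preimage_fixedLocus :
    IsPathConnected ((↑) ⁻¹' fixedLocus l : Set (Sph (l + 5))) := by
  rw [Topology.IsInducing.subtypeVal.isPathConnected_iff, Subtype.image_preimage_coe,
    inter_eq_right.mpr fun v (hv : v ∈ fixedLocus l) => hv.1]
  exact isPathConnected_fixedLocus

section AddChar

variable {A : Type*} [AddMonoid A] {χ : AddChar A Circle} {j : ℕ}
  (hχ : ∀ g, χ g ^ (4 * j) = χ g) (v : Sph (l + 5))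

theorem spinAct_zero : spinAct χ hχ 0 v = v := by
  rw [Subtype.ext_iff, coe_spinAct, AddChar.map_zero_eq_one, spin_one j v.2]

theorem spinAct_add (g h : A) : spinAct χ hχ (g + h) v = spinAct χ hχ g (spinAct χ hχ h v) := by
  rw [Subtype.ext_iff, coe_spinAct, coe_spinAct, coe_spinAct, AddChar.map_add_eq_mul,
    spin_spin (hχ h) v.2 (hχ g)]

end AddChar

theorem exists_four_mul_eq {p : ℕ} (hp : Odd p) : ∃ j m : ℕ, 4 * j = p * m + 1 := by
  obtain ⟨i, rfl⟩ := hp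
  rcases Nat.even_or_odd' i with ⟨i, rfl | rfl⟩
  · exact ⟨3 * i + 1, 3, by ring⟩
  · exact ⟨i + 1, 1, by ring⟩

section Character

variable {p : ℕ} [NeZero p] {j m : ℕ} (hj : 4 * j = p * m + 1)
include hj

theorem toCircle_pow_eq (k : ZMod p) : ZMod.toCircle k ^ (4 * j) = ZMod.toCircle k := by
  have hpow : ZMod.toCircle k ^ p = 1 := by
    rw [← AddChar.map_nsmul_eq_pow, nsmul_eq_mul, CharP.cast_eq_zero, zero_mul,
      AddChar.map_zero_eq_one]
  rw [hj, pow_succ, pow_mul, hpow, one_pow, one_mul]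

theorem fixedSet_spinAct (hp : p ≠ 1) :
    fixedSet (spinAct ZMod.toCircle (toCircle_pow_eq hj)) =
      ((↑) ⁻¹' fixedLocus l : Set (Sph (l + 5))) := by
  have : Nontrivial (ZMod p) := ZMod.nontrivial_iff.mpr hp
  have hone : ZMod.toCircle (1 : ZMod p) ≠ 1 := fun h =>
    one_ne_zero (ZMod.injective_toCircle (h.trans (AddChar.map_zero_eq_one _).symm))
  ext v
  refine ⟨fun hv => ⟨v.2, ?_⟩, fun hv k => ?_⟩
  · exact defect_eq_zero_of_spin_eq_self (toCircle_pow_eq hj 1) hone v.2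
      (congrArg Subtype.val (hv 1))
  · exact Subtype.ext (spin_of_defect_eq_zero (toCircle_pow_eq hj k) v.2 hv.2)

end Character

end SpunSphere

theorem exists_smooth_zmod_sphere_invTC_ge_four_general (p : ℕ) (hp : Odd p) (hp1 : p ≠ 1)
    (n : ℕ) (hn : 3 ≤ n) :
    ∃ act : ZMod p → ↥(Sph (n + 2)) → ↥(Sph (n + 2)),
      (∀ x, act 0 x = x) ∧
      (∀ g h x, act (g + h) x = act g (act h x)) ∧
      (∀ g, ContMDiff (𝓡 (n + 2)) (𝓡 (n + 2)) (⊤ : ℕ∞) (act g)) ∧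
      (fixedSet act).Nonempty ∧
      IsPathConnected (fixedSet act) ∧
      4 ≤ invTC act := by
  obtain ⟨l, rfl⟩ := Nat.exists_eq_add_of_le' hn
  obtain ⟨j, m, hj⟩ := SpunSphere.exists_four_mul_eq hp
  have : NeZero p := ⟨hp.pos.ne'⟩
  let act : ZMod p → Sph (l + 5) → Sph (l + 5) :=
    SpunSphere.spinAct ZMod.toCircle (SpunSphere.toCircle_pow_eq hj)
  have hfixed : fixedSet act = (↑) ⁻¹' SpunSphere.fixedLocus l :=
    SpunSphere.fixedSet_spinAct hj hp1
  have hpath : IsPathConnected (fixedSet act) :=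
    hfixed ▸ SpunSphere.isPathConnected_preimage_fixedLocus
  have hTC : 4 ≤ TC (fixedSet act) := hfixed ▸ SpunSphere.four_le_TC_preimage_fixedLocus
  exact ⟨act, SpunSphere.spinAct_zero _, fun g h v => SpunSphere.spinAct_add _ v g h, fun g =>
    SpunSphere.contMDiff_spinAct _ _ g ⊤, hpath.nonempty, hpath,
    hTC.trans SpunSphere.TC_fixedSet_le_invTC⟩

/-- For every odd prime `p` and every `n ≥ 3` there is a smooth action of
`ℤ/p` on the standard sphere `S^{n+2}` whose fixed point set is non-empty and
path-connected, and whose invariant topological complexity is at least `4`. -/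
theorem exists_smooth_zmod_sphere_invTC_ge_four (p : ℕ) (hp : p.Prime) (hp2 : p ≠ 2)
    (n : ℕ) (hn : 3 ≤ n) :
    ∃ act : ZMod p → ↥(Sph (n + 2)) → ↥(Sph (n + 2)),
      (∀ x, act 0 x = x) ∧
      (∀ g h x, act (g + h) x = act g (act h x)) ∧
      (∀ g, ContMDiff (𝓡 (n + 2)) (𝓡 (n + 2)) (⊤ : ℕ∞) (act g)) ∧
      (fixedSet act).Nonempty ∧
      IsPathConnected (fixedSet act) ∧
      4 ≤ invTC act :=
  exists_smooth_zmod_sphere_invTC_ge_four_general p (hp.odd_of_ne_two hp2) hp.ne_one n hn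
end

section
/- Let G be a compact Hausdorff topological group acting continuously on a topological space X, and let H ⊆ G be a closed subgroup. Then TC(X^H) ≤ TC_G(X). In particular, TC(X) ≤ TC_G(X). -/
open Set unitInterval

open PaperTC

/-! If `x` and `y` are fixed by `S ⊆ G` and `s` is an equivariant motion planner, then
`g · s(x, y) = s(g · x, g · y) = s(x, y)` for `g ∈ S`, so the path `s(x, y)` runs inside `X^S`.
Hence equivariant motion planners on `X` restrict to motion planners on `X^S`, and `X^∅ = X`. -/

namespace PaperTC

open Topology

theorem minCover_antitone : Antitone minCover :=
  fun _ _ h => sInf_le_sInf fun _ ⟨m, hk, hm, hP⟩ => ⟨m, hk, hm, h m hP⟩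

section Lifting

variable {K T X Y : Type*} [TopologicalSpace K] [TopologicalSpace X] [TopologicalSpace Y]

theorem exists_continuousMap_lift_of_isInducing {f : Y → X} (hf : IsInducing f) {γ : C(K, X)}
    (hγ : range γ ⊆ range f) : ∃ γ' : C(K, Y), ∀ t, f (γ' t) = γ t := by
  choose γ' hγ' using fun t => hγ (mem_range_self t)
  exact ⟨⟨γ', hf.continuous_iff.2 (γ.continuous.congr fun t => (hγ' t).symm)⟩, hγ'⟩

theorem exists_continuousOn_lift_of_isInducing [TopologicalSpace T] [Nonempty C(K, Y)]
    {f : Y → X} (hf : IsInducing f) {F : T → C(K, X)} {V : Set T} (hF : ContinuousOn F V)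
    (hV : ∀ p ∈ V, range (F p) ⊆ range f) :
    ∃ F' : T → C(K, Y), ContinuousOn F' V ∧ ∀ p ∈ V, ∀ t, f (F' p t) = F p t := by
  choose! F' hF' using fun p hp => exists_continuousMap_lift_of_isInducing hf (hV p hp)
  have hpost : IsInducing fun γ : C(K, Y) => (⟨f, hf.continuous⟩ : C(Y, X)).comp γ :=
    ContinuousMap.isInducing_postcomp _ hf
  exact ⟨F', hpost.continuousOn_iff.2 (hF.congr fun p hp => ContinuousMap.ext (hF' p hp)), hF'⟩

end Lifting

section MotionPlanner

variable {X Y : Type*} [TopologicalSpace X] [TopologicalSpace Y]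

/-- The notion of a motion planner on `U`, named so that planners can be restricted to subspaces.
As in `TCcover`, the map `s` is total and only its values on `U` matter. -/
def IsMotionPlannerOn (s : Y × Y → C(I, Y)) (U : Set (Y × Y)) : Prop :=
  ContinuousOn s U ∧ ∀ p ∈ U, s p 0 = p.1 ∧ s p 1 = p.2

theorem IsMotionPlannerOn.exists_lift_of_isEmbedding {f : Y → X} (hf : IsEmbedding f)
    {s : X × X → C(I, X)} {U : Set (X × X)} (hs : IsMotionPlannerOn s U)
    (hrange : ∀ p : Y × Y, Prod.map f f p ∈ U → range (s (Prod.map f f p)) ⊆ range f) :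
    ∃ s' : Y × Y → C(I, Y), IsMotionPlannerOn s' (Prod.map f f ⁻¹' U) := by
  obtain ⟨hcont, hends⟩ := hs
  rcases isEmpty_or_nonempty Y with _ | ⟨⟨y₀⟩⟩
  · exact ⟨isEmptyElim, continuous_of_discreteTopology.continuousOn, fun p => isEmptyElim p⟩
  have : Nonempty C(I, Y) := ⟨.const I y₀⟩
  have hpull : ContinuousOn (s ∘ Prod.map f f) (Prod.map f f ⁻¹' U) :=
    hcont.comp (hf.continuous.prodMap hf.continuous).continuousOn (mapsTo_preimage _ _)
  obtain ⟨s', hs', hlift⟩ := exists_continuousOn_lift_of_isInducing hf.isInducing hpull hrange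
  refine ⟨s', hs', fun p hp => ⟨hf.injective ?_, hf.injective ?_⟩⟩
  · exact (hlift p hp 0).trans (hends _ hp).1
  · exact (hlift p hp 1).trans (hends _ hp).2

end MotionPlanner

section FixedSet

variable {G X Y Z : Type*} {act : G → X → X} {S : Set G}

theorem mem_fixedSetOf_of_equivariant {actZ : G → Z → Z} {φ : Z → X} {z : Z}
    (hφ : ∀ g ∈ S, φ (actZ g z) = act g (φ z)) (hz : z ∈ fixedSetOf actZ S) :
    φ z ∈ fixedSetOf act S :=
  fun g hg => by rw [← hφ g hg, hz g hg]

theorem mem_fixedSetOf_prod {actZ : G → Z → Z} {p : X × Z} (h₁ : p.1 ∈ fixedSetOf act S)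
    (h₂ : p.2 ∈ fixedSetOf actZ S) :
    p ∈ fixedSetOf (fun g (q : X × Z) => (act g q.1, actZ g q.2)) S :=
  fun g hg => Prod.ext (h₁ g hg) (h₂ g hg)

variable [TopologicalSpace X] [TopologicalSpace Y]

theorem eqTCcover.TCcover_of_isEmbedding {f : Y → X} (hf : IsEmbedding f)
    (hfix : range f = fixedSetOf act S) {k : ℕ} (h : eqTCcover act k) : TCcover Y k := by
  obtain ⟨U, hopen, hcover, hU⟩ := h
  refine ⟨fun i => Prod.map f f ⁻¹' U i,
    fun i => (hopen i).preimage (hf.continuous.prodMap hf.continuous), ?_, fun i => ?_⟩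
  · rw [← preimage_iUnion, hcover, preimage_univ]
  obtain ⟨-, s, hcont, hends, hequiv⟩ := hU i
  refine IsMotionPlannerOn.exists_lift_of_isEmbedding hf ⟨hcont, hends⟩ fun p hp => ?_
  have hfixed (y : Y) : f y ∈ fixedSetOf act S := hfix ▸ mem_range_self y
  rw [hfix]
  rintro - ⟨t, rfl⟩
  exact mem_fixedSetOf_of_equivariant (φ := fun q => s q t) (fun g _ => hequiv g _ hp t)
    (mem_fixedSetOf_prod (hfixed p.1) (hfixed p.2))

theorem TC_le_eqTC_of_isEmbedding {f : Y → X} (hf : IsEmbedding f)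
    (hfix : range f = fixedSetOf act S) : TC Y ≤ eqTC act :=
  minCover_antitone fun _ => eqTCcover.TCcover_of_isEmbedding hf hfix

end FixedSet

end PaperTC

theorem TC_fixed_le_eqTC_general {G X : Type*} [TopologicalSpace X] (act : G → X → X)
    (S : Set G) : TC ↥(fixedSetOf act S) ≤ eqTC act ∧ TC X ≤ eqTC act :=
  have range_id_eq : range (id : X → X) = fixedSetOf act ∅ := by simp [fixedSetOf]
  ⟨TC_le_eqTC_of_isEmbedding .subtypeVal Subtype.range_coe,
    TC_le_eqTC_of_isEmbedding .id range_id_eq⟩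

/-- For a compact Hausdorff topological group `G` acting continuously on a
space `X` and a closed subgroup `H ⊆ G`, the topological complexity of the `H`-fixed point
set bounds the equivariant topological complexity from below; in particular
`TC(X) ≤ TC_G(X)`. -/
theorem TC_fixed_le_eqTC {G X : Type*} [Group G] [TopologicalSpace G]
    [IsTopologicalGroup G] [CompactSpace G] [T2Space G] [TopologicalSpace X]
    (act : G → X → X)
    (act_one : ∀ x, act 1 x = x)
    (act_mul : ∀ g h x, act (g * h) x = act g (act h x))
    (act_cont : Continuous fun p : G × X => act p.1 p.2)
    (H : Subgroup G) (hH : IsClosed (H : Set G)) :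
    TC ↥(fixedSetOf act (H : Set G)) ≤ eqTC act ∧ TC X ≤ eqTC act :=
  TC_fixed_le_eqTC_general act H
end

section
/- Let G be a compact Hausdorff topological group acting continuously on a topological space X with X^G ≠ ∅. Then max{TC(X^G), TC(X/G)} ≤ TC^G(X), where X/G is the orbit space with the quotient topology. -/
/-!
By currying, a motion planner on `U ⊆ Y × Y` is a homotopy between the two projections `U → Y`, and
a local section of `π^G` over `U ⊆ X × X` is a pair of equivariant homotopies `pr₁ ≃ a` and
`b ≃ pr₂` such that `a p` and `b p` always lie in one orbit. Concatenating the two homotopies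
requires `a = b`, and this holds in two situations. Over pairs of fixed points, equivariance keeps
both homotopies inside `X^G`, where orbits are singletons. After composing with `X → X/G`,
equivariance makes the concatenated homotopy constant on the fibres of `X × X → X/G × X/G`, so it
descends to the image of `U`, which is open and carries the quotient topology because that map is
open.
-/

open Set unitInterval

open PaperTC

namespace PaperTC

open ContinuousMap Topology

lemma minCover_anti {P Q : ℕ → Prop} (h : ∀ k, P k → Q k) : minCover Q ≤ minCover P :=
  sInf_le_sInf fun _ ⟨m, hkm, hm, hP⟩ => ⟨m, hkm, hm, h m hP⟩

section Homotopy

variable {W Y Z Z' : Type*} [TopologicalSpace W] [TopologicalSpace Y] [TopologicalSpace Z]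
  [TopologicalSpace Z']

lemma homotopicWith_prop_right {f g : C(Z, Y)} {P : C(Z, Y) → Prop}
    (h : f.HomotopicWith g P) : P g := by
  obtain ⟨F⟩ := h
  simpa using F.prop 1

lemma homotopicWith_postcomp {f g : C(Z, Y)} {P : C(Z, Y) → Prop} {Q : C(Z, W) → Prop}
    (h : f.HomotopicWith g P) (k : C(Y, W)) (hPQ : ∀ e, P e → Q (k.comp e)) :
    (k.comp f).HomotopicWith (k.comp g) Q := by
  obtain ⟨F⟩ := h
  exact ⟨⟨(ContinuousMap.Homotopy.refl k).comp F.toHomotopy, fun t => hPQ _ (F.prop t)⟩⟩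

lemma homotopicWith_precomp {f g : C(Z, Y)} {P : C(Z, Y) → Prop} {Q : C(Z', Y) → Prop}
    (h : f.HomotopicWith g P) (k : C(Z', Z)) (hPQ : ∀ e, P e → Q (e.comp k)) :
    (f.comp k).HomotopicWith (g.comp k) Q := by
  obtain ⟨F⟩ := h
  exact ⟨⟨F.toHomotopy.compContinuousMap k, fun t => hPQ _ (F.prop t)⟩⟩

lemma homotopicWith_of_pathFamily (s : C(Z, C(I, Y))) {f g : C(Z, Y)} {P : C(Z, Y) → Prop}
    (hf : ∀ z, s z 0 = f z) (hg : ∀ z, s z 1 = g z)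
    (hP : ∀ t, P ⟨fun z => s z t, by fun_prop⟩) : f.HomotopicWith g P :=
  ⟨{ toFun := fun p => s p.2 p.1
     continuous_toFun := by fun_prop
     map_zero_left := hf
     map_one_left := hg
     prop' := hP }⟩

lemma homotopic_of_homotopicWith_val_comp {A : Set Y} {f g : C(Z, A)}
    (h : (ContinuousMap.comp ⟨Subtype.val, continuous_subtype_val⟩ f).HomotopicWith
      (ContinuousMap.comp ⟨Subtype.val, continuous_subtype_val⟩ g) fun e => ∀ z, e z ∈ A) :
    f.Homotopic g := by
  obtain ⟨F⟩ := h
  exact ⟨{ toFun := fun p => ⟨F p, F.prop p.1 p.2⟩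
           continuous_toFun := F.continuous.subtype_mk _
           map_zero_left := fun z => Subtype.ext (F.apply_zero z)
           map_one_left := fun z => Subtype.ext (F.apply_one z) }⟩

lemma homotopic_of_homotopicWith_comp_isQuotientMap {r : C(Z, W)} (hr : IsQuotientMap r)
    {f g : C(W, Y)}
    (h : (f.comp r).HomotopicWith (g.comp r) fun e => Function.FactorsThrough e r) :
    f.Homotopic g := by
  obtain ⟨F⟩ := h
  let H : I × W → Y := fun p => F (p.1, Function.surjInv hr.surjective p.2)
  have H_apply (t : I) (z : Z) : H (t, r z) = F (t, z) :=
    F.prop t (Function.surjInv_eq hr.surjective (r z))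
  refine ⟨{ toFun := H, continuous_toFun := ?_, map_zero_left := ?_, map_one_left := ?_ }⟩
  · refine hr.continuous_lift_prod_right ?_
    simpa only [H_apply] using F.continuous
  · exact hr.surjective.forall.2 fun z => (H_apply 0 z).trans (F.apply_zero z)
  · exact hr.surjective.forall.2 fun z => (H_apply 1 z).trans (F.apply_one z)

lemma isOpenQuotientMap_imageFactorization {r : Z → W} (hr : IsOpenMap r) (hrc : Continuous r)
    {U : Set Z} (hU : IsOpen U) : IsOpenQuotientMap (U.imageFactorization r) where
  surjective := imageFactorization_surjective
  continuous := (hrc.comp continuous_subtype_val).subtype_mk _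
  isOpenMap := (hr.domRestrict hU).subtype_mk _

end Homotopy

section MotionPlanner

variable {Y : Type*} [TopologicalSpace Y]

/-- `U ⊆ Y × Y` admits a motion planner, encoded by currying as a homotopy between the two
projections `U → Y`. -/
def HasMotionPlanner (U : Set (Y × Y)) : Prop :=
  (ContinuousMap.fst.restrict U).Homotopic (ContinuousMap.snd.restrict U)

lemma HasMotionPlanner.exists_continuousOn {U : Set (Y × Y)} (hU : HasMotionPlanner U) :
    ∃ s : Y × Y → C(I, Y), ContinuousOn s U ∧ ∀ p ∈ U, s p 0 = p.1 ∧ s p 1 = p.2 := by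
  obtain ⟨F⟩ := hU
  let γ : C(U, C(I, Y)) := (F.toContinuousMap.comp prodSwap).curry
  let s : Y × Y → C(I, Y) := Function.extend Subtype.val γ fun p => const I p.1
  have s_apply (p : U) : s p = γ p := Subtype.val_injective.extend_apply _ _ p
  refine ⟨s, ?_, fun p hp => ?_⟩
  · rw [continuousOn_iff_continuous_domRestrict]
    exact γ.continuous.congr fun p => (s_apply p).symm
  · rw [s_apply ⟨p, hp⟩]
    exact ⟨F.apply_zero ⟨p, hp⟩, F.apply_one ⟨p, hp⟩⟩

lemma TCcover_of_hasMotionPlanner {k : ℕ} {U : Fin k → Set (Y × Y)} (hUo : ∀ i, IsOpen (U i))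
    (hUc : ⋃ i, U i = univ) (hU : ∀ i, HasMotionPlanner (U i)) : TCcover Y k :=
  ⟨U, hUo, hUc, fun i => (hU i).exists_continuousOn⟩

end MotionPlanner

section Action

variable {G X : Type*} (act : G → X → X)

/-- `h : U → X`, for `U ⊆ X × X`, is equivariant along `φ : G × G → G`. As only pairs of points of
`U` in a common `(G × G)`-orbit are compared, this makes sense without `U` being invariant. -/
def IsEquivariantAlong (φ : G × G → G) {U : Set (X × X)} (h : U → X) : Prop :=
  ∀ (g : G × G) (p q : U), (act g.1 p.1.1, act g.2 p.1.2) = (q : X × X) → h q = act (φ g) (h p)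

variable {act}

lemma IsEquivariantAlong.mem_fixedSet {φ : G × G → G} {U : Set (X × X)} {h : U → X}
    (hh : IsEquivariantAlong act φ h) (hφ : Function.Surjective φ) {p : U}
    (h₁ : p.1.1 ∈ fixedSet act) (h₂ : p.1.2 ∈ fixedSet act) : h p ∈ fixedSet act :=
  hφ.forall.2 fun g => (hh g p p (Prod.ext (h₁ g.1) (h₂ g.2))).symm

lemma eq_of_mem_fixedSet_of_orbit_eq [Nonempty G] {x y : X} (hx : x ∈ fixedSet act)
    (hy : y ∈ fixedSet act) (hxy : orbit act x = orbit act y) : x = y := by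
  obtain ⟨g⟩ := ‹Nonempty G›
  obtain ⟨g', hg'⟩ : x ∈ orbit act y := hxy ▸ ⟨g, hx g⟩
  exact hg'.symm.trans (hy g')

variable [TopologicalSpace X]

variable (act) in
/-- `U ⊆ X × X` admits an equivariant local section of `π^G`, encoded by currying as a pair of
homotopies `pr₁ ≃ a` and `b ≃ pr₂` on `U`, equivariant along the two projections `G × G → G`. -/
def HasInvMotionPlanner (U : Set (X × X)) : Prop :=
  ∃ a b : C(U, X),
    (ContinuousMap.fst.restrict U).HomotopicWith a (fun h => IsEquivariantAlong act Prod.fst h) ∧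
    b.HomotopicWith (ContinuousMap.snd.restrict U) (fun h => IsEquivariantAlong act Prod.snd h) ∧
    ∀ p, orbit act (a p) = orbit act (b p)

lemma exists_cover_hasInvMotionPlanner {k : ℕ} (h : invTCcover act k) :
    ∃ U : Fin k → Set (X × X),
      (∀ i, IsOpen (U i)) ∧ ⋃ i, U i = univ ∧ ∀ i, HasInvMotionPlanner act (U i) := by
  obtain ⟨U, hUo, hUc, hU⟩ := h
  refine ⟨U, hUo, hUc, fun i => ?_⟩
  obtain ⟨-, s₁, s₂, hs₁, hs₂, hend, heqv⟩ := hU i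
  let γ₁ : C(U i, C(I, X)) := ⟨_, hs₁.domRestrict⟩
  let γ₂ : C(U i, C(I, X)) := ⟨_, hs₂.domRestrict⟩
  refine ⟨⟨fun p => γ₁ p 1, by fun_prop⟩, ⟨fun p => γ₂ p 0, by fun_prop⟩,
    homotopicWith_of_pathFamily γ₁ (fun p => (hend p p.2).1) (fun _ => rfl) ?_,
    homotopicWith_of_pathFamily γ₂ (fun _ => rfl) (fun p => (hend p p.2).2.1) ?_,
    fun p => (hend p p.2).2.2⟩
  · rintro t g p ⟨_, -⟩ rfl
    exact (heqv g.1 g.2 p p.2 t).1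
  · rintro t g p ⟨_, -⟩ rfl
    exact (heqv g.1 g.2 p p.2 t).2

lemma HasInvMotionPlanner.hasMotionPlanner_fixedSet [Nonempty G] {U : Set (X × X)}
    (hU : HasInvMotionPlanner act U) :
    HasMotionPlanner (Prod.map Subtype.val Subtype.val ⁻¹' U :
      Set (fixedSet act × fixedSet act)) := by
  obtain ⟨a, b, ha, hb, hab⟩ := hU
  let ι : C(fixedSet act × fixedSet act, X × X) :=
    ⟨Prod.map Subtype.val Subtype.val, by fun_prop⟩
  let j : C(ι ⁻¹' U, U) := ι.restrictPreimage U
  have ha' := homotopicWith_precomp (Q := fun e => ∀ p, e p ∈ fixedSet act) ha j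
    fun e he p => he.mem_fixedSet Prod.fst_surjective p.1.1.2 p.1.2.2
  have hb' := homotopicWith_precomp (Q := fun e => ∀ p, e p ∈ fixedSet act) hb j
    fun e he p => he.mem_fixedSet Prod.snd_surjective p.1.1.2 p.1.2.2
  have hmid : a.comp j = b.comp j := ContinuousMap.ext fun p =>
    eq_of_mem_fixedSet_of_orbit_eq (homotopicWith_prop_right ha' p)
      (homotopicWith_prop_right hb'.symm p) (hab (j p))
  exact homotopic_of_homotopicWith_val_comp (ha'.trans (hmid ▸ hb'))

theorem TCcover_fixedSet_of_invTCcover [Nonempty G] {k : ℕ} (h : invTCcover act k) :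
    TCcover (fixedSet act) k := by
  obtain ⟨U, hUo, hUc, hU⟩ := exists_cover_hasInvMotionPlanner h
  refine TCcover_of_hasMotionPlanner (fun i => (hUo i).preimage (by fun_prop)) ?_
    fun i => (hU i).hasMotionPlanner_fixedSet
  rw [← preimage_iUnion, hUc, preimage_univ]

section OrbitSpace

variable (act) in
/-- The projection `X → X/G` as a continuous map. -/
def orbitMk : C(X, OrbitSpace act) := ⟨Quot.mk _, continuous_quot_mk⟩

lemma orbitMk_act (g : G) (x : X) : orbitMk act (act g x) = orbitMk act x :=
  (Quot.sound ⟨g, rfl⟩).symm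

lemma orbitMk_eq_of_orbit_eq [Nonempty G] {x y : X} (hxy : orbit act x = orbit act y) :
    orbitMk act x = orbitMk act y := by
  obtain ⟨g⟩ := ‹Nonempty G›
  obtain ⟨g', hg'⟩ : act g x ∈ orbit act y := hxy ▸ ⟨g, rfl⟩
  rw [← orbitMk_act g x, ← hg', orbitMk_act]

variable [Group G]

lemma orbitMk_eq_iff (act_one : ∀ x, act 1 x = x)
    (act_mul : ∀ g h x, act (g * h) x = act g (act h x)) {x y : X} :
    orbitMk act x = orbitMk act y ↔ ∃ g, act g x = y := by
  have equiv : Equivalence fun x y => ∃ g, act g x = y :=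
    { refl := fun x => ⟨1, act_one x⟩
      symm := by
        rintro x _ ⟨g, rfl⟩
        exact ⟨g⁻¹, by rw [← act_mul, inv_mul_cancel, act_one]⟩
      trans := by
        rintro x _ _ ⟨g, rfl⟩ ⟨h, rfl⟩
        exact ⟨h * g, act_mul h g x⟩ }
  exact (Quot.eq.trans equiv.eqvGen_iff :)

lemma isOpenQuotientMap_orbitMk (act_one : ∀ x, act 1 x = x)
    (act_mul : ∀ g h x, act (g * h) x = act g (act h x)) (act_cont : ∀ g, Continuous (act g)) :
    IsOpenQuotientMap (orbitMk act) where
  surjective := Quot.mk_surjective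
  continuous := (orbitMk act).continuous
  isOpenMap V hV := by
    have saturation : orbitMk act ⁻¹' (orbitMk act '' V) = ⋃ g, act g ⁻¹' V := by
      ext x
      simp only [mem_preimage, mem_image, mem_iUnion, eq_comm (b := orbitMk act x),
        orbitMk_eq_iff act_one act_mul]
      exact ⟨fun ⟨_, hy, g, hg⟩ => ⟨g, hg ▸ hy⟩, fun ⟨g, hg⟩ => ⟨_, hg, g, rfl⟩⟩
    have preimage_open : IsOpen (orbitMk act ⁻¹' (orbitMk act '' V)) :=
      saturation ▸ isOpen_iUnion fun g => hV.preimage (act_cont g)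
    exact preimage_open

lemma IsEquivariantAlong.orbitMk_factorsThrough (act_one : ∀ x, act 1 x = x)
    (act_mul : ∀ g h x, act (g * h) x = act g (act h x)) {φ : G × G → G} {U : Set (X × X)}
    {h : U → X} (hh : IsEquivariantAlong act φ h) :
    Function.FactorsThrough (orbitMk act ∘ h)
      (U.imageFactorization (Prod.map (orbitMk act) (orbitMk act))) := by
  intro p q hpq
  obtain ⟨h₁, h₂⟩ := Prod.ext_iff.1 (congrArg Subtype.val hpq)
  obtain ⟨g₁, hg₁⟩ := (orbitMk_eq_iff act_one act_mul).1 h₁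
  obtain ⟨g₂, hg₂⟩ := (orbitMk_eq_iff act_one act_mul).1 h₂
  rw [Function.comp_apply, Function.comp_apply, hh (g₁, g₂) p q (Prod.ext hg₁ hg₂), orbitMk_act]

lemma HasInvMotionPlanner.hasMotionPlanner_orbitSpace (act_one : ∀ x, act 1 x = x)
    (act_mul : ∀ g h x, act (g * h) x = act g (act h x)) (act_cont : ∀ g, Continuous (act g))
    {U : Set (X × X)} (hUo : IsOpen U) (hU : HasInvMotionPlanner act U) :
    HasMotionPlanner (Prod.map (orbitMk act) (orbitMk act) '' U) := by
  obtain ⟨a, b, ha, hb, hab⟩ := hU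
  have hopen := (isOpenQuotientMap_orbitMk act_one act_mul act_cont).isOpenMap
  have hr := isOpenQuotientMap_imageFactorization (hopen.prodMap hopen) (by fun_prop) hUo
  let r : C(U, Prod.map (orbitMk act) (orbitMk act) '' U) := ⟨_, hr.continuous⟩
  have ha' := homotopicWith_postcomp (Q := fun e => Function.FactorsThrough e r) ha (orbitMk act)
    fun e he => he.orbitMk_factorsThrough act_one act_mul
  have hb' := homotopicWith_postcomp (Q := fun e => Function.FactorsThrough e r) hb (orbitMk act)
    fun e he => he.orbitMk_factorsThrough act_one act_mul
  have hmid : (orbitMk act).comp a = (orbitMk act).comp b :=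
    ContinuousMap.ext fun p => orbitMk_eq_of_orbit_eq (hab p)
  exact homotopic_of_homotopicWith_comp_isQuotientMap (r := r) hr.isQuotientMap
    (ha'.trans (hmid ▸ hb'))

theorem TCcover_orbitSpace_of_invTCcover (act_one : ∀ x, act 1 x = x)
    (act_mul : ∀ g h x, act (g * h) x = act g (act h x)) (act_cont : ∀ g, Continuous (act g))
    {k : ℕ} (h : invTCcover act k) : TCcover (OrbitSpace act) k := by
  obtain ⟨U, hUo, hUc, hU⟩ := exists_cover_hasInvMotionPlanner h
  have hq := isOpenQuotientMap_orbitMk act_one act_mul act_cont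
  refine TCcover_of_hasMotionPlanner (fun i => (hq.isOpenMap.prodMap hq.isOpenMap) _ (hUo i)) ?_
    fun i => (hU i).hasMotionPlanner_orbitSpace act_one act_mul act_cont (hUo i)
  rw [← image_iUnion, hUc, image_univ, (hq.surjective.prodMap hq.surjective).range_eq]

end OrbitSpace

end Action

end PaperTC

theorem max_TC_fixed_TC_orbit_le_invTC_general {G X : Type*} [Group G] [TopologicalSpace X]
    (act : G → X → X)
    (act_one : ∀ x, act 1 x = x)
    (act_mul : ∀ g h x, act (g * h) x = act g (act h x))
    (act_cont : ∀ g, Continuous (act g)) :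
    max (TC ↥(fixedSet act)) (TC (OrbitSpace act)) ≤ invTC act :=
  max_le (minCover_anti fun _ => TCcover_fixedSet_of_invTCcover)
    (minCover_anti fun _ => TCcover_orbitSpace_of_invTCcover act_one act_mul act_cont)

/-- For a compact Hausdorff topological group `G` acting continuously on a
space `X` with `X^G ≠ ∅`, both the topological complexity of the fixed point set and that of
the orbit space bound the invariant topological complexity from below. -/
theorem max_TC_fixed_TC_orbit_le_invTC {G X : Type*} [Group G] [TopologicalSpace G]
    [IsTopologicalGroup G] [CompactSpace G] [T2Space G] [TopologicalSpace X]
    (act : G → X → X)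
    (act_one : ∀ x, act 1 x = x)
    (act_mul : ∀ g h x, act (g * h) x = act g (act h x))
    (act_cont : Continuous fun p : G × X => act p.1 p.2)
    (hfix : (fixedSet act).Nonempty) :
    max (TC ↥(fixedSet act)) (TC (OrbitSpace act)) ≤ invTC act :=
  max_TC_fixed_TC_orbit_le_invTC_general act act_one act_mul fun g =>
    act_cont.comp (Continuous.prodMk_right g)
end
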